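/- arXiv:1302.5073 — 2 statements merged into one kernel-verified Lean document; each statement's English description precedes it below -/
import Mathlib

section
/- Let n ≥ 3, 0 < α < 1, k ≥ 0. For every f ∈ C^{k,α}(B_R) with ‖f‖_α^{(k)} finite, the Newtonian potential N(f)(x) = ∫_{B_R} Γ(x−y)f(y)dy belongs to C^{k+2,α}(B_R) and satisfies ‖N(f)‖_α^{(k+2)} ≤ C ‖f‖_α^{(k)}, where C depends only on n, k, α and not on R. Consequently, for any m ≥ 1, ‖N^m(f)‖_α^{(k+2m)} ≤ C ‖f‖_α^{(k)}. -/
open MeasureTheory Metric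

noncomputable section

def sphArea (n : ℕ) : ℝ :=
  (μH[(n : ℝ) - 1] (sphere (0 : EuclideanSpace ℝ (Fin n)) 1)).toReal

def fundSol (n : ℕ) (x : EuclideanSpace ℝ (Fin n)) : ℝ :=
  (1 / (n * (2 - (n : ℝ)) * sphArea n)) * ‖x‖ ^ ((2 : ℝ) - n)

def ee {n : ℕ} (i : Fin n) : EuclideanSpace ℝ (Fin n) := EuclideanSpace.single i 1

def supN {n : ℕ} (s : Set (EuclideanSpace ℝ (Fin n)))
    (g : EuclideanSpace ℝ (Fin n) → ℝ) : ℝ :=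
  sSup ((fun x => |g x|) '' s)

def holdN {n : ℕ} (α : ℝ) (s : Set (EuclideanSpace ℝ (Fin n)))
    (g : EuclideanSpace ℝ (Fin n) → ℝ) : ℝ :=
  sSup {c | ∃ x ∈ s, ∃ y ∈ s, x ≠ y ∧ c = |g x - g y| / ‖x - y‖ ^ α}

def alphaNorm (n : ℕ) (R α : ℝ) (g : EuclideanSpace ℝ (Fin n) → ℝ) : ℝ :=
  supN (ball (0 : EuclideanSpace ℝ (Fin n)) R) g +
    R ^ α * holdN α (ball (0 : EuclideanSpace ℝ (Fin n)) R) g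

def kNorm (n : ℕ) (R α : ℝ) (k : ℕ) (f : EuclideanSpace ℝ (Fin n) → ℝ) : ℝ :=
  ⨆ v : Fin k → Fin n,
    alphaNorm n R α (fun x => iteratedFDeriv ℝ k f x (fun i => ee (v i)))

/-- `f ∈ C^{k,α}(B_R)` with finite `‖f‖_α^{(k)}`. -/
def memCkα (n k : ℕ) (R α : ℝ) (f : EuclideanSpace ℝ (Fin n) → ℝ) : Prop :=
  ContDiffOn ℝ k f (ball (0 : EuclideanSpace ℝ (Fin n)) R) ∧
  ∀ w : Fin k → Fin n,
    BddAbove ((fun x => |iteratedFDeriv ℝ k f x (fun i => ee (w i))|) ''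
      ball (0 : EuclideanSpace ℝ (Fin n)) R) ∧
    BddAbove {c | ∃ x ∈ ball (0 : EuclideanSpace ℝ (Fin n)) R,
      ∃ y ∈ ball (0 : EuclideanSpace ℝ (Fin n)) R, x ≠ y ∧
        c = |iteratedFDeriv ℝ k f x (fun i => ee (w i)) -
              iteratedFDeriv ℝ k f y (fun i => ee (w i))| / ‖x - y‖ ^ α}

/-- The Newtonian potential operator over the ball of radius `R`. -/
def newt (n : ℕ) (R : ℝ) (f : EuclideanSpace ℝ (Fin n) → ℝ) :
    EuclideanSpace ℝ (Fin n) → ℝ :=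
  fun x => ∫ y in ball (0 : EuclideanSpace ℝ (Fin n)) R, fundSol n (x - y) * f y



section PolyCalc

variable {E : Type} [NormedAddCommGroup E] [NormedSpace ℝ E]

/-- Polynomial maps of degree at most `m`, defined by recursion on the degree. -/
def PolyDeg : ℕ → ∀ {F : Type} [NormedAddCommGroup F] [NormedSpace ℝ F], (E → F) → Prop
  | 0, _, _, _, q => ∃ c, q = fun _ => c
  | m + 1, _, _, _, q => Differentiable ℝ q ∧ PolyDeg m (fderiv ℝ q)

variable {F : Type} [NormedAddCommGroup F] [NormedSpace ℝ F]
variable {G : Type} [NormedAddCommGroup G] [NormedSpace ℝ G]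
variable {H : Type} [NormedAddCommGroup H] [NormedSpace ℝ H]

lemma PolyDeg.const (m : ℕ) (c : F) : PolyDeg m (fun _ : E => c) := by
  induction m generalizing F with
  | zero => exact ⟨c, rfl⟩
  | succ m ih =>
    refine ⟨differentiable_const c, ?_⟩
    have : fderiv ℝ (fun _ : E => c) = fun _ => 0 := by ext x; simp
    rw [this]; exact ih 0

lemma PolyDeg.succ {m : ℕ} {q : E → F} (h : PolyDeg m q) : PolyDeg (m + 1) q := by
  induction m generalizing F with
  | zero => obtain ⟨c, rfl⟩ := h; exact PolyDeg.const _ c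
  | succ m ih => exact ⟨h.1, ih h.2⟩

lemma PolyDeg.mono {m m' : ℕ} {q : E → F} (h : PolyDeg m q) (hm : m ≤ m') : PolyDeg m' q := by
  induction hm with
  | refl => exact h
  | step _ ih => exact ih.succ

lemma PolyDeg.differentiable {m : ℕ} {q : E → F} (h : PolyDeg m q) : Differentiable ℝ q :=
  h.succ.1

lemma PolyDeg.fderiv_succ {m : ℕ} {q : E → F} (h : PolyDeg (m+1) q) : PolyDeg m (fderiv ℝ q) :=
  h.2

lemma PolyDeg.fderiv {m : ℕ} {q : E → F} (h : PolyDeg m q) : PolyDeg m (fderiv ℝ q) :=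
  h.succ.2

lemma PolyDeg.contDiff {m : ℕ} {q : E → F} (h : PolyDeg m q) (N : ℕ) : ContDiff ℝ N q := by
  induction N generalizing F with
  | zero => exact contDiff_zero.2 h.differentiable.continuous
  | succ N ih =>
    have : ((N + 1 : ℕ) : WithTop ℕ∞) = (N : WithTop ℕ∞) + 1 := by push_cast; rfl
    rw [this, contDiff_succ_iff_fderiv]
    refine ⟨h.differentiable, by simp, ih h.fderiv⟩

lemma PolyDeg.add {m : ℕ} {p q : E → F} (hp : PolyDeg m p) (hq : PolyDeg m q) :
    PolyDeg m (fun x => p x + q x) := by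
  induction m generalizing F with
  | zero =>
    obtain ⟨c, rfl⟩ := hp; obtain ⟨d, rfl⟩ := hq; exact ⟨c + d, rfl⟩
  | succ m ih =>
    refine ⟨hp.1.add hq.1, ?_⟩
    have : _root_.fderiv ℝ (fun x => p x + q x) =
        fun x => _root_.fderiv ℝ p x + _root_.fderiv ℝ q x := by
      ext1 x; exact fderiv_add (hp.1 x) (hq.1 x)
    rw [this]; exact ih hp.2 hq.2

lemma PolyDeg.clm {m : ℕ} {q : E → F} (T : F →L[ℝ] G) (hq : PolyDeg m q) :
    PolyDeg m (fun x => T (q x)) := by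
  induction m generalizing F G with
  | zero =>
    obtain ⟨c, rfl⟩ := hq; exact ⟨T c, rfl⟩
  | succ m ih =>
    refine ⟨T.differentiable.comp hq.1, ?_⟩
    have : _root_.fderiv ℝ (fun x => T (q x)) =
        fun x => (ContinuousLinearMap.compL ℝ E F G T) (_root_.fderiv ℝ q x) := by
      ext1 x
      exact (T.hasFDerivAt.comp x (hq.1 x).hasFDerivAt).fderiv
    rw [this]; exact ih _ hq.2

lemma PolyDeg.smul {m : ℕ} {q : E → F} (c : ℝ) (hq : PolyDeg m q) :
    PolyDeg m (fun x => c • q x) :=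
  hq.clm (c • ContinuousLinearMap.id ℝ F)

lemma PolyDeg.sum {m : ℕ} {ι : Type} (s : Finset ι) {q : ι → E → F}
    (h : ∀ i ∈ s, PolyDeg m (q i)) : PolyDeg m (fun x => ∑ i ∈ s, q i x) := by
  classical
  induction s using Finset.induction_on with
  | empty => simpa using PolyDeg.const m (0 : F)
  | insert a s ha ih =>
    simp only [Finset.sum_insert ha]
    exact (h a (by simp)).add (ih fun i hi => h i (by simp [hi]))

lemma PolyDeg.sub {m : ℕ} {p q : E → F} (hp : PolyDeg m p) (hq : PolyDeg m q) :
    PolyDeg m (fun x => p x - q x) := by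
  have := hp.add (hq.smul (-1))
  simpa [sub_eq_add_neg] using this

lemma PolyDeg.linear (T : E →L[ℝ] F) : PolyDeg 1 (fun x => T x) := by
  refine ⟨T.differentiable, T, ?_⟩
  ext1 x; exact T.fderiv

lemma PolyDeg.id_sub (x₀ : E) : PolyDeg 1 (fun x : E => x - x₀) :=
  (PolyDeg.linear (ContinuousLinearMap.id ℝ E)).sub (PolyDeg.const 1 x₀)

lemma PolyDeg.bilin {a b : ℕ} {p : E → F} {q : E → G} (L : F →L[ℝ] G →L[ℝ] H)
    (hp : PolyDeg a p) (hq : PolyDeg b q) : PolyDeg (a + b) (fun x => L (p x) (q x)) := by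
  obtain ⟨N, hN⟩ : ∃ N, N = a + b := ⟨_, rfl⟩
  induction N generalizing F G H a b with
  | zero =>
    obtain ⟨rfl, rfl⟩ : a = 0 ∧ b = 0 := by omega
    obtain ⟨c, rfl⟩ := hp; obtain ⟨d, rfl⟩ := hq
    exact ⟨L c d, rfl⟩
  | succ N ih =>
    rw [← hN]
    refine ⟨?_, ?_⟩
    · intro x
      exact (L.hasFDerivAt_of_bilinear (hp.differentiable x).hasFDerivAt
        (hq.differentiable x).hasFDerivAt).differentiableAt
    have : _root_.fderiv ℝ (fun x => L (p x) (q x)) =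
        fun x => L.precompR E (p x) (_root_.fderiv ℝ q x) +
          L.precompL E (_root_.fderiv ℝ p x) (q x) := by
      ext1 x
      exact L.fderiv_of_bilinear (hp.differentiable x) (hq.differentiable x)
    rw [this]
    apply PolyDeg.add
    · cases b with
      | zero =>
        obtain ⟨d, rfl⟩ := hq
        simp only [fderiv_fun_const, Pi.zero_apply, map_zero]
        exact PolyDeg.const _ _
      | succ b =>
        have hN' : N = a + b := by omega
        have := ih (L.precompR E) hp hq.2 hN'
        rwa [← hN'] at this
    · cases a with
      | zero =>
        obtain ⟨d, rfl⟩ := hp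
        simp only [fderiv_fun_const, Pi.zero_apply, map_zero]
        exact PolyDeg.const _ _
      | succ a =>
        have hN' : N = a + b := by omega
        have := ih (L.precompL E) hp.2 hq hN'
        rwa [← hN'] at this

lemma PolyDeg.mul {a b : ℕ} {p q : E → ℝ}
    (hp : PolyDeg a p) (hq : PolyDeg b q) : PolyDeg (a + b) (fun x => p x * q x) :=
  hp.bilin (ContinuousLinearMap.mul ℝ ℝ) hq

lemma PolyDeg.diag_aux (j : ℕ) {b : ℕ} (A : E → (E [×j]→L[ℝ] F)) (hA : PolyDeg b A) (x₀ : E) :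
    PolyDeg (b + j) (fun z => A z (fun _ => z - x₀)) := by
  induction j generalizing b with
  | zero =>
    have := hA.clm (continuousMultilinearCurryFin0 ℝ E F : _ ≃L[ℝ] F).toContinuousLinearMap
    simp only [add_zero]
    convert this using 2 with z
    exact congrArg _ (Subsingleton.elim _ _)
  | succ j ih =>
    have h1 := hA.clm (G := E →L[ℝ] (E [×j]→L[ℝ] F))
      ((continuousMultilinearCurryLeftEquiv ℝ (fun _ : Fin (j+1) => E)
        F).toContinuousLinearEquiv.toContinuousLinearMap :
          (E [×(j+1)]→L[ℝ] F) →L[ℝ] (E →L[ℝ] (E [×j]→L[ℝ] F)))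
    have h2 := h1.bilin (ContinuousLinearMap.id ℝ _) (PolyDeg.id_sub x₀)
    have h3 := ih _ h2
    rw [show b + (j + 1) = b + 1 + j by ring]
    convert h3 using 2 with z
    show A z _ = A z _
    congr 1
    ext i; refine Fin.cases ?_ (fun _ => ?_) i <;> simp

lemma PolyDeg.diag (j : ℕ) (A : E [×j]→L[ℝ] F) (x₀ : E) :
    PolyDeg j (fun z => A (fun _ => z - x₀)) := by
  have := PolyDeg.diag_aux j (fun _ => A) (PolyDeg.const 0 A) x₀
  rwa [zero_add] at this

lemma PolyDeg.iteratedFDeriv {i : ℕ} (j : ℕ) {q : E → F} (hq : PolyDeg (i + j) q) :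
    PolyDeg i (iteratedFDeriv ℝ j q) := by
  induction j generalizing i with
  | zero =>
    rw [iteratedFDeriv_zero_eq_comp]
    exact PolyDeg.clm (continuousMultilinearCurryFin0 ℝ E F).symm.toContinuousLinearEquiv.toContinuousLinearMap hq
  | succ j ih =>
    rw [iteratedFDeriv_succ_eq_comp_left]
    have h := ih (i := i + 1) (by rwa [show i + 1 + j = i + (j + 1) by ring])
    exact PolyDeg.clm
      (continuousMultilinearCurryLeftEquiv ℝ (fun _ : Fin (j+1) => E)
        F).symm.toContinuousLinearEquiv.toContinuousLinearMap h.2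

lemma PolyDeg.iteratedFDeriv_const {m : ℕ} {q : E → F} (hq : PolyDeg m q) (x y : E) :
    _root_.iteratedFDeriv ℝ m q x = _root_.iteratedFDeriv ℝ m q y := by
  obtain ⟨c, hc⟩ := PolyDeg.iteratedFDeriv (i := 0) m (by rwa [zero_add])
  rw [hc]

lemma PolyDeg.iteratedFDeriv_succ_eq_zero {m : ℕ} {q : E → F} (hq : PolyDeg m q) (x : E) :
    _root_.iteratedFDeriv ℝ (m + 1) q x = 0 := by
  obtain ⟨c, hc⟩ := PolyDeg.iteratedFDeriv (i := 0) m (by rwa [zero_add])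
  rw [iteratedFDeriv_succ_eq_comp_left, hc]
  simp only [fderiv_fun_const, Function.comp_apply, Pi.zero_apply]
  exact LinearIsometryEquiv.map_zero _

/-- Isometry property for the right currying of iterated derivatives. -/
lemma norm_iteratedFDeriv_succ_sub (k : ℕ) (f : E → F) (x y : E) :
    ‖iteratedFDeriv ℝ k (fderiv ℝ f) x - iteratedFDeriv ℝ k (fderiv ℝ f) y‖ =
      ‖iteratedFDeriv ℝ (k+1) f x - iteratedFDeriv ℝ (k+1) f y‖ := by
  rw [iteratedFDeriv_succ_eq_comp_right, iteratedFDeriv_succ_eq_comp_right]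
  simp only [Function.comp_apply]
  rw [← dist_eq_norm, ← dist_eq_norm]
  exact (LinearIsometryEquiv.dist_map _ _ _).symm

lemma taylor_bound (k : ℕ) {f : E → F} {s : Set E} (hs : IsOpen s) (hf : ContDiffOn ℝ k f s)
    {x v : E} {A α : ℝ} (hA : 0 ≤ A) (hα : 0 ≤ α)
    (hseg : ∀ t : ℝ, t ∈ Set.Icc (0:ℝ) 1 → x + t • v ∈ s)
    (hb : ∀ t : ℝ, t ∈ Set.Icc (0:ℝ) 1 →
      ‖iteratedFDeriv ℝ k f (x + t • v) - iteratedFDeriv ℝ k f x‖ ≤ A * (t * ‖v‖) ^ α) :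
    ‖f (x + v) - ∑ j ∈ Finset.range (k + 1),
      ((j.factorial : ℝ)⁻¹) • iteratedFDeriv ℝ j f x (fun _ => v)‖ ≤ A * ‖v‖ ^ (k + α) := by
  induction k generalizing F v with
  | zero =>
    have := hb 1 (by simp)
    rw [iteratedFDeriv_zero_eq_comp] at this
    simp only [Function.comp_apply] at this
    rw [← map_sub, LinearIsometryEquiv.norm_map] at this
    simpa using this
  | succ k ih =>
    have hdiff : ∀ y ∈ s, DifferentiableAt ℝ f y := fun y hy =>
      (hf.differentiableOn (by simp)).differentiableAt (hs.mem_nhds hy)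
    have hf' : ContDiffOn ℝ k (fderiv ℝ f) s := by
      have := hf
      rw [show ((k + 1 : ℕ) : WithTop ℕ∞) = (k : WithTop ℕ∞) + 1 by push_cast; rfl,
        contDiffOn_succ_iff_fderiv_of_isOpen hs] at this
      exact this.2.2
    set g : ℝ → F := fun t => f (x + t • v) - ∑ j ∈ Finset.range (k + 1 + 1),
      (t ^ j * (j.factorial : ℝ)⁻¹) • iteratedFDeriv ℝ j f x (fun _ => v) with hg
    set g' : ℝ → F := fun t => (fderiv ℝ f (x + t • v) - ∑ j ∈ Finset.range (k + 1),
      ((j.factorial : ℝ)⁻¹) • iteratedFDeriv ℝ j (fderiv ℝ f) x (fun _ => t • v)) v with hg'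
    have hder : ∀ t ∈ Set.Icc (0:ℝ) 1, HasDerivAt g (g' t) t := by
      intro t ht
      have h1 : HasDerivAt (fun t : ℝ => f (x + t • v)) (fderiv ℝ f (x + t • v) v) t := by
        have h := (hdiff _ (hseg t ht)).hasFDerivAt
        have h2 : HasDerivAt (fun t : ℝ => x + t • v) v t := by
          simpa using ((hasDerivAt_id t).smul_const v).const_add x
        exact h.comp_hasDerivAt t h2
      have h2 : HasDerivAt (fun t : ℝ => ∑ j ∈ Finset.range (k + 1 + 1),
          (t ^ j * (j.factorial : ℝ)⁻¹) • iteratedFDeriv ℝ j f x (fun _ => v))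
          (∑ j ∈ Finset.range (k + 1 + 1),
          ((j * t ^ (j-1)) * (j.factorial : ℝ)⁻¹) • iteratedFDeriv ℝ j f x (fun _ => v)) t := by
        apply HasDerivAt.fun_sum
        intro j _
        exact ((hasDerivAt_pow j t).mul_const _).smul_const _
      have h12 : HasDerivAt g _ t := h1.sub h2
      refine h12.congr_deriv ?_
      symm
      show (_ - _ : E →L[ℝ] F) v = _
      rw [_root_.sub_apply]
      congr 1
      rw [_root_.sum_apply, Finset.sum_range_succ' _ (k+1)]
      simp only [Nat.cast_zero, zero_mul, zero_smul, add_zero]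
      apply Finset.sum_congr rfl
      intro j _
      rw [iteratedFDeriv_succ_apply_right]
      have : (Fin.init fun _ : Fin (j+1) => v) = fun _ => v := rfl
      rw [this]
      have h3 : (iteratedFDeriv ℝ j (fderiv ℝ f) x fun _ => t • v) =
          t ^ j • (iteratedFDeriv ℝ j (fderiv ℝ f) x fun _ => v) := by
        have := (iteratedFDeriv ℝ j (fderiv ℝ f) x).map_smul_univ (fun _ => t) (fun _ => v)
        simpa using this
      rw [h3, smul_smul, _root_.smul_apply]
      congr 1
      rw [Nat.factorial_succ]
      have : (j.factorial : ℝ) ≠ 0 := by positivity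
      rw [Nat.add_sub_cancel]
      push_cast
      field_simp
    have hbound : ∀ t ∈ Set.Icc (0:ℝ) 1, ‖g' t‖ ≤ A * ‖v‖ ^ (k + α) * ‖v‖ := by
      intro t ht
      have := ih (v := t • v) hf' (fun τ hτ => by
        rw [smul_smul]; exact hseg _ ⟨mul_nonneg hτ.1 ht.1, mul_le_one₀ hτ.2 ht.1 ht.2⟩)
        (fun τ hτ => by
          rw [norm_iteratedFDeriv_succ_sub, smul_smul, norm_smul, Real.norm_of_nonneg ht.1,
            ← mul_assoc]
          exact hb _ ⟨mul_nonneg hτ.1 ht.1, mul_le_one₀ hτ.2 ht.1 ht.2⟩)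
      refine (ContinuousLinearMap.le_opNorm _ _).trans ?_
      refine mul_le_mul_of_nonneg_right (this.trans ?_) (norm_nonneg _)
      apply mul_le_mul_of_nonneg_left _ hA
      apply Real.rpow_le_rpow (norm_nonneg _) _ (by positivity)
      rw [norm_smul, Real.norm_of_nonneg ht.1]
      exact mul_le_of_le_one_left (norm_nonneg _) ht.2
    have hmv := norm_image_sub_le_of_norm_deriv_le_segment_01'
      (f := g) (f' := g') (C := A * ‖v‖ ^ (k + α) * ‖v‖)
      (fun t ht => (hder t ht).hasDerivWithinAt)
      (fun t ht => hbound t ⟨ht.1, ht.2.le⟩)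
    have hg0 : g 0 = 0 := by
      simp only [hg]
      rw [Finset.sum_range_succ']
      simp
    rw [hg0, sub_zero] at hmv
    have hg1 : g 1 = f (x + v) - ∑ j ∈ Finset.range (k + 1 + 1),
      ((j.factorial : ℝ)⁻¹) • iteratedFDeriv ℝ j f x (fun _ => v) := by
      simp [hg]
    rw [← hg1]
    refine hmv.trans (le_of_eq ?_)
    rcases eq_or_ne v 0 with rfl | hv
    · simp only [norm_zero, mul_zero]
      rw [Real.zero_rpow (by positivity)]; simp
    · rw [mul_assoc, ← Real.rpow_add_one (by simpa using hv)]
      congr 2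
      push_cast; ring

lemma PolyDeg.taylor {m : ℕ} {q : E → F} (hq : PolyDeg m q) (x v : E) :
    q (x + v) = ∑ j ∈ Finset.range (m + 1),
      ((j.factorial : ℝ)⁻¹) • _root_.iteratedFDeriv ℝ j q x (fun _ => v) := by
  have := taylor_bound m isOpen_univ (hq.contDiff m).contDiffOn (x := x) (v := v) (A := 0) (α := 0)
    le_rfl le_rfl (by simp) (fun t _ => by
      rw [hq.iteratedFDeriv_const (x + t • v) x]; simp)
  rw [zero_mul] at this
  exact sub_eq_zero.1 (norm_le_zero_iff.1 this)

end PolyCalc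



section Bernstein

lemma lagrange_coeff_bound (m : ℕ) : ∃ C > 0, ∀ (F : Type) [NormedAddCommGroup F] [NormedSpace ℝ F]
    (c : ℕ → F) (A : ℝ), (∀ t ∈ Set.Icc (0:ℝ) 1, ‖∑ j ∈ Finset.range (m + 1), t ^ j • c j‖ ≤ A) →
    ∀ i ∈ Finset.range (m + 1), ‖c i‖ ≤ C * A := by
  classical
  set v : ℕ → ℝ := fun l => l / (m + 1) with hv
  set s := Finset.range (m + 1) with hs
  have hinj : Set.InjOn v s := by
    intro a _ b _ hab
    simp only [hv] at hab
    have : (0:ℝ) < m + 1 := by positivity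
    field_simp at hab
    exact_mod_cast hab
  have key : ∀ i i', i' ∈ s → ∑ l ∈ s, v l ^ i' * (Lagrange.basis s v l).coeff i =
      if i = i' then 1 else 0 := by
    intro i i' hi'
    have h := Lagrange.eq_interpolate (s := s) (v := v) (f := (Polynomial.X ^ i' : Polynomial ℝ)) hinj
      (by
        rw [Polynomial.degree_X_pow, hs, Finset.card_range]
        exact_mod_cast Finset.mem_range.1 hi')
    have h2 := congrArg (fun p => Polynomial.coeff p i) h
    simp only [Lagrange.interpolate_apply, Polynomial.coeff_X_pow, Polynomial.finsetSum_coeff,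
      Polynomial.coeff_C_mul, Polynomial.eval_pow, Polynomial.eval_X] at h2
    exact h2.symm
  refine ⟨1 + ∑ i ∈ s, ∑ l ∈ s, |(Lagrange.basis s v l).coeff i|, by positivity, ?_⟩
  intro F _ _ c A hA i hi
  have hA0 : 0 ≤ A := (norm_nonneg _).trans (hA 0 (by simp))
  have hc : c i = ∑ l ∈ s, (Lagrange.basis s v l).coeff i • ∑ j ∈ s, v l ^ j • c j := by
    simp only [Finset.smul_sum, smul_smul]
    rw [Finset.sum_comm]
    have : ∀ j ∈ s, ∑ l ∈ s, ((Lagrange.basis s v l).coeff i * v l ^ j) • c j =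
        if i = j then c j else 0 := by
      intro j hj
      rw [← Finset.sum_smul]
      have := key i j hj
      simp only [mul_comm] at this ⊢
      rw [this]
      split_ifs <;> simp
    rw [Finset.sum_congr rfl this]
    simp [hi]
  calc ‖c i‖ ≤ ∑ l ∈ s, |(Lagrange.basis s v l).coeff i| * A := by
        rw [hc]
        refine (norm_sum_le _ _).trans (Finset.sum_le_sum fun l hl => ?_)
        rw [norm_smul, Real.norm_eq_abs]
        refine mul_le_mul_of_nonneg_left (hA _ ?_) (abs_nonneg _)
        have : (l : ℝ) ≤ m := by
          have := Finset.mem_range.1 hl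
          exact_mod_cast Nat.lt_succ_iff.1 this
        refine ⟨by simp only [hv]; positivity, ?_⟩
        simp only [hv]
        rw [div_le_one (by positivity)]; linarith
    _ = (∑ l ∈ s, |(Lagrange.basis s v l).coeff i|) * A := by rw [Finset.sum_mul]
    _ ≤ _ := by
        apply mul_le_mul_of_nonneg_right _ hA0
        have := Finset.single_le_sum (f := fun i => ∑ l ∈ s, |(Lagrange.basis s v l).coeff i|)
          (fun i _ => by positivity) hi
        linarith

variable {E : Type} [NormedAddCommGroup E] [NormedSpace ℝ E]

lemma PolyDeg.line {F : Type} [NormedAddCommGroup F] [NormedSpace ℝ F] {m : ℕ} {q : E → F}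
    (hq : PolyDeg m q) (x v : E) (t : ℝ) :
    q (x + t • v) = ∑ j ∈ Finset.range (m + 1), t ^ j •
      (((j.factorial : ℝ)⁻¹) • _root_.iteratedFDeriv ℝ j q x (fun _ => v)) := by
  rw [hq.taylor x (t • v)]
  refine Finset.sum_congr rfl fun j _ => ?_
  have := (_root_.iteratedFDeriv ℝ j q x).map_smul_univ (fun _ => t) (fun _ => v)
  simp only [Finset.prod_const, Finset.card_univ, Fintype.card_fin] at this
  rw [this, smul_comm]

lemma bern_zero (m : ℕ) (Λ : ℝ) (hΛ : 1 ≤ Λ) : ∃ C > 0, ∀ (F : Type) [NormedAddCommGroup F]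
    [NormedSpace ℝ F] (q : E → F), PolyDeg m q → ∀ (c : E) (r A : ℝ), 0 < r →
    (∀ z ∈ ball c r, ‖q z‖ ≤ A) → ∀ w, ‖w - c‖ ≤ Λ * r → ‖q w‖ ≤ C * A := by
  obtain ⟨C, hC, h⟩ := lagrange_coeff_bound m
  refine ⟨∑ j ∈ Finset.range (m + 1), (2 * Λ) ^ j * C, ?_, ?_⟩
  · apply Finset.sum_pos
    · intro i _; positivity
    · simp
  intro F _ _ q hq c r A hr hA w hw
  set u : E := (2 * Λ)⁻¹ • (w - c) with hu
  have hΛ0 : 0 < Λ := by linarith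
  have hun : ‖u‖ < r := by
    rw [hu, norm_smul, Real.norm_of_nonneg (by positivity), inv_mul_lt_iff₀ (by positivity)]
    nlinarith
  have hcb := h F (fun j => ((j.factorial : ℝ)⁻¹) • _root_.iteratedFDeriv ℝ j q c (fun _ => u)) A
    (fun t ht => by
      rw [← hq.line c u t]
      apply hA
      rw [mem_ball, dist_eq_norm, add_sub_cancel_left, norm_smul, Real.norm_of_nonneg ht.1]
      exact lt_of_le_of_lt (mul_le_of_le_one_left (norm_nonneg _) ht.2) hun)
  have hw' : w = c + (2 * Λ) • u := by
    rw [hu, smul_smul, mul_inv_cancel₀ (by positivity)]; simp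
  rw [hw', hq.line, Finset.sum_mul]
  refine (norm_sum_le _ _).trans (Finset.sum_le_sum fun j hj => ?_)
  rw [norm_smul, Real.norm_of_nonneg (by positivity), mul_assoc]
  exact mul_le_mul_of_nonneg_left (hcb j hj) (by positivity)

lemma bern_one (m : ℕ) (Λ : ℝ) (hΛ : 1 ≤ Λ) : ∃ C > 0, ∀ (F : Type) [NormedAddCommGroup F]
    [NormedSpace ℝ F] (q : E → F), PolyDeg m q → ∀ (c : E) (r A : ℝ), 0 < r →
    (∀ z ∈ ball c r, ‖q z‖ ≤ A) → ∀ w, ‖w - c‖ ≤ Λ * r → ‖fderiv ℝ q w‖ ≤ C * A / r := by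
  obtain ⟨C, hC, h⟩ := lagrange_coeff_bound (m + 1)
  obtain ⟨C', hC', h'⟩ := bern_zero (E := E) m (Λ + 1) (by linarith)
  refine ⟨C * C' * 2, by positivity, ?_⟩
  intro F _ _ q hq c r A hr hA w hw
  have hA0 : 0 ≤ A := (norm_nonneg _).trans (hA c (by simp [hr]))
  have hball : ∀ z, ‖z - w‖ ≤ r → ‖q z‖ ≤ C' * A := by
    intro z hz
    apply h' F q hq c r A hr hA
    calc ‖z - c‖ = ‖(z - w) + (w - c)‖ := by congr 1; abel
      _ ≤ ‖z - w‖ + ‖w - c‖ := norm_add_le _ _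
      _ ≤ _ := by linarith
  apply ContinuousLinearMap.opNorm_le_bound _ (by positivity)
  intro v
  rcases eq_or_ne v 0 with rfl | hv
  · simp
  have hv0 : 0 < ‖v‖ := norm_pos_iff.2 hv
  set s : ℝ := r / ‖v‖ with hs
  have hs0 : 0 < s := by positivity
  have := h F (fun j => ((j.factorial : ℝ)⁻¹) •
    _root_.iteratedFDeriv ℝ j q w (fun _ => s • v)) (C' * A)
    (fun t ht => by
      rw [← hq.succ.line w (s • v) t]
      apply hball
      rw [add_sub_cancel_left, norm_smul, norm_smul, Real.norm_of_nonneg ht.1,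
        Real.norm_of_nonneg hs0.le, hs, div_mul_cancel₀ _ hv0.ne']
      exact mul_le_of_le_one_left hr.le ht.2) 1 (by simp)
  simp only [Nat.factorial_one, Nat.cast_one, inv_one, one_smul] at this
  rw [iteratedFDeriv_one_apply, map_smul, norm_smul, Real.norm_of_nonneg hs0.le, hs] at this
  rw [div_mul_eq_mul_div, div_le_iff₀ hv0] at this
  rw [div_mul_eq_mul_div, le_div_iff₀ hr]
  have : 0 ≤ C * (C' * A) * ‖v‖ := by positivity
  nlinarith

lemma bern (j m : ℕ) : ∃ C > 0, ∀ (F : Type) [NormedAddCommGroup F]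
    [NormedSpace ℝ F] (q : E → F), PolyDeg m q → ∀ (c : E) (r A : ℝ), 0 < r →
    (∀ z ∈ ball c r, ‖q z‖ ≤ A) → ∀ w, ‖w - c‖ ≤ r →
    ‖iteratedFDeriv ℝ j q w‖ ≤ C * A / r ^ j := by
  induction j with
  | zero =>
    obtain ⟨C, hC, h⟩ := bern_zero (E := E) m 1 le_rfl
    refine ⟨C, hC, ?_⟩
    intro F _ _ q hq c r A hr hA w hw
    rw [norm_iteratedFDeriv_zero, pow_zero, div_one]
    exact h F q hq c r A hr hA w (by simpa using hw)
  | succ j ih =>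
    obtain ⟨C, hC, h⟩ := ih
    obtain ⟨C', hC', h'⟩ := bern_one (E := E) m 1 le_rfl
    refine ⟨C * C', by positivity, ?_⟩
    intro F _ _ q hq c r A hr hA w hw
    rw [← norm_iteratedFDeriv_fderiv]
    have := h _ (fderiv ℝ q) hq.fderiv c r (C' * A / r) hr (fun z hz =>
      h' F q hq c r A hr hA z (by rw [← dist_eq_norm, one_mul]; exact (mem_ball.1 hz).le)) w hw
    refine this.trans (le_of_eq ?_)
    rw [pow_succ]
    field_simp

lemma ball_geom {R : ℝ} {x y : E} (hx : x ∈ ball (0:E) R) (hy : y ∈ ball (0:E) R) (hxy : x ≠ y) :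
    ∃ c : E, ‖y - c‖ ≤ ‖x - y‖ / 2 ∧ ∀ z ∈ ball c (‖x - y‖ / 2),
      z ∈ ball (0:E) R ∧ ‖z - y‖ ≤ ‖x - y‖ ∧ ‖z - x‖ ≤ 2 * ‖x - y‖ := by
  rw [mem_ball_zero_iff] at hx hy
  have hR : 0 < R := (norm_nonneg _).trans_lt hx
  set h := ‖x - y‖ with hh
  have h0 : 0 < h := norm_pos_iff.2 (sub_ne_zero.2 hxy)
  have h2R : h < 2 * R := by
    have := norm_sub_le x y; linarith
  set s := h / (2 * R) with hs
  have hs0 : 0 < s := by positivity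
  have hs1 : s < 1 := by rw [hs, div_lt_one (by positivity)]; exact h2R
  have hsR : s * R = h / 2 := by rw [hs]; field_simp
  have hyc : ‖y - (1 - s) • y‖ ≤ h / 2 := by
    have : y - (1 - s) • y = s • y := by rw [sub_smul, one_smul]; abel
    rw [this, norm_smul, Real.norm_of_nonneg hs0.le, ← hsR]
    exact mul_le_mul_of_nonneg_left hy.le hs0.le
  refine ⟨(1 - s) • y, hyc, ?_⟩
  intro z hz
  rw [mem_ball, dist_eq_norm] at hz
  have hzy : ‖z - y‖ ≤ h := by
    have := norm_sub_le_norm_sub_add_norm_sub z ((1 - s) • y) y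
    rw [norm_sub_rev ((1 - s) • y) y] at this
    linarith
  refine ⟨?_, hzy, ?_⟩
  · rw [mem_ball_zero_iff]
    have h1 : ‖z‖ ≤ ‖z - (1 - s) • y‖ + ‖(1 - s) • y‖ := by
      simpa using norm_add_le (z - (1 - s) • y) ((1 - s) • y)
    rw [norm_smul, Real.norm_of_nonneg (by linarith)] at h1
    have : (1 - s) * ‖y‖ ≤ (1 - s) * R := mul_le_mul_of_nonneg_left hy.le (by linarith)
    nlinarith
  · have := norm_sub_le_norm_sub_add_norm_sub z y x
    rw [norm_sub_rev y x] at this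
    linarith

lemma ct_key (m : ℕ) (α : ℝ) (hα : 0 < α) : ∃ C > 0, ∀ (R : ℝ) (u : E → ℝ) (P : E → E → ℝ) (A : ℝ),
    0 ≤ A → (∀ x ∈ ball (0:E) R, PolyDeg m (P x)) →
    (∀ x ∈ ball (0:E) R, ∀ z ∈ ball (0:E) R, |u z - P x z| ≤ A * ‖z - x‖ ^ (m + α)) →
    ∀ j ≤ m, ∀ x ∈ ball (0:E) R, ∀ y ∈ ball (0:E) R,
      ‖iteratedFDeriv ℝ j (P x) y - iteratedFDeriv ℝ j (P y) y‖ ≤ C * A * ‖x - y‖ ^ (m + α - j) := by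
  choose Cb hCb hb using fun j => bern (E := E) j m
  set K : ℝ := (2 ^ (m + α) + 1) with hK
  have hK0 : 0 < K := by positivity
  refine ⟨∑ j ∈ Finset.range (m + 1), Cb j * K * 2 ^ j, ?_, ?_⟩
  · apply Finset.sum_pos
    · intro i _; have := hCb i; positivity
    · simp
  intro R u P A hA hP hu j hj x hx y hy
  rcases eq_or_ne x y with rfl | hxy
  · simp only [sub_self, norm_zero]
    have : ∀ i, 0 < Cb i := hCb
    have : 0 ≤ ∑ j ∈ Finset.range (m + 1), Cb j * K * 2 ^ j :=
      Finset.sum_nonneg fun i _ => by have := hCb i; positivity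
    positivity
  set h := ‖x - y‖ with hh
  have h0 : 0 < h := norm_pos_iff.2 (sub_ne_zero.2 hxy)
  obtain ⟨c, hc1, hc2⟩ := ball_geom hx hy hxy
  have hq := (hP x hx).sub (hP y hy)
  have hbd : ∀ z ∈ ball c (h / 2), ‖P x z - P y z‖ ≤ A * K * h ^ (m + α) := by
    intro z hz
    obtain ⟨hz1, hz2, hz3⟩ := hc2 z hz
    have h1 := hu x hx z hz1
    have h2 := hu y hy z hz1
    have e1 : ‖z - x‖ ^ (m + α) ≤ 2 ^ (m + α) * h ^ (m + α) := by
      rw [← Real.mul_rpow (by norm_num) h0.le]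
      exact Real.rpow_le_rpow (norm_nonneg _) hz3 (by positivity)
    have e2 : ‖z - y‖ ^ (m + α) ≤ h ^ (m + α) :=
      Real.rpow_le_rpow (norm_nonneg _) hz2 (by positivity)
    have h1' := h1.trans (mul_le_mul_of_nonneg_left e1 hA)
    have h2' := h2.trans (mul_le_mul_of_nonneg_left e2 hA)
    rw [Real.norm_eq_abs, hK]
    calc |P x z - P y z| = |(u z - P y z) - (u z - P x z)| := by congr 1; ring
      _ ≤ |u z - P y z| + |u z - P x z| := abs_sub _ _
      _ ≤ _ := by linarith
  have := hb j ℝ _ hq c (h / 2) _ (by positivity) hbd y hc1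
  have e : iteratedFDeriv ℝ j (fun z => P x z - P y z) y =
      iteratedFDeriv ℝ j (P x) y - iteratedFDeriv ℝ j (P y) y :=
    iteratedFDeriv_sub_apply (((hP x hx).contDiff j).contDiffAt) (((hP y hy).contDiff j).contDiffAt)
  rw [e] at this
  refine this.trans ?_
  have e3 : h ^ (m + α - j) = h ^ (m + α) / h ^ j := by
    rw [Real.rpow_sub h0, Real.rpow_natCast]
  rw [e3]
  have e4 : Cb j * (A * K * h ^ (m + α)) / (h / 2) ^ j =
      (Cb j * K * 2 ^ j) * (A * (h ^ (m + α) / h ^ j)) := by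
    rw [div_pow]
    field_simp
  rw [e4, mul_assoc (Finset.sum _ _) A]
  apply mul_le_mul_of_nonneg_right _ (by positivity)
  exact Finset.single_le_sum (f := fun j => Cb j * K * 2 ^ j)
    (fun i _ => by have := hCb i; positivity) (Finset.mem_range.2 (by omega))

lemma hasFDerivWithinAt_zero_of_bound {F : Type} [NormedAddCommGroup F] [NormedSpace ℝ F]
    {e : E → F} {s : Set E} {x : E} {C β : ℝ} (hβ : 1 < β) (hC : 0 < C)
    (h : ∀ y ∈ s, ‖e y‖ ≤ C * ‖x - y‖ ^ β) (hex : e x = 0) :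
    HasFDerivWithinAt e (0 : E →L[ℝ] F) s x := by
  rw [hasFDerivWithinAt_iff_isLittleO, Asymptotics.isLittleO_iff]
  intro c hc
  have ht : Filter.Tendsto (fun y : E => C * ‖x - y‖ ^ (β - 1)) (nhdsWithin x s) (nhds 0) := by
    have : ContinuousAt (fun y : E => C * ‖x - y‖ ^ (β - 1)) x := by
      apply ContinuousAt.mul continuousAt_const
      apply ContinuousAt.rpow_const (by fun_prop)
      right; linarith
    have h2 := this.tendsto
    simp only [sub_self, norm_zero] at h2
    rw [Real.zero_rpow (by linarith), mul_zero] at h2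
    exact h2.mono_left nhdsWithin_le_nhds
  filter_upwards [ht.eventually_le_const hc, self_mem_nhdsWithin] with y hy hys
  simp only [hex, sub_zero, _root_.zero_apply]
  refine (h y hys).trans ?_
  rcases eq_or_ne y x with rfl | hne
  · simp [Real.zero_rpow (by linarith : β ≠ 0)]
  have : 0 < ‖x - y‖ := norm_pos_iff.2 (sub_ne_zero.2 hne.symm)
  have e1 : ‖x - y‖ ^ β = ‖x - y‖ ^ (β - 1) * ‖x - y‖ := by
    rw [← Real.rpow_add_one this.ne']; congr 1; ring
  rw [e1, ← mul_assoc, norm_sub_rev y x]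
  exact mul_le_mul_of_nonneg_right hy this.le

theorem converse_taylor (m : ℕ) (α : ℝ) (hα : 0 < α) : ∃ C > 0, ∀ (R : ℝ) (u : E → ℝ)
    (P : E → E → ℝ) (A : ℝ),
    0 ≤ A → (∀ x ∈ ball (0:E) R, PolyDeg m (P x)) →
    (∀ x ∈ ball (0:E) R, ∀ z ∈ ball (0:E) R, |u z - P x z| ≤ A * ‖z - x‖ ^ (m + α)) →
    ContDiffOn ℝ m u (ball (0:E) R) ∧
    (∀ x ∈ ball (0:E) R, iteratedFDeriv ℝ m u x = iteratedFDeriv ℝ m (P x) x) ∧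
    ∀ x ∈ ball (0:E) R, ∀ y ∈ ball (0:E) R,
      ‖iteratedFDeriv ℝ m u x - iteratedFDeriv ℝ m u y‖ ≤ C * A * ‖x - y‖ ^ α := by
  obtain ⟨C, hC, key⟩ := ct_key (E := E) m α hα
  refine ⟨C, hC, ?_⟩
  intro R u P A hA hP hu
  have hk := key R u P A hA hP hu
  set p : E → FormalMultilinearSeries ℝ E ℝ := fun x j => iteratedFDeriv ℝ j (P x) x with hp
  have holder : ∀ x ∈ ball (0:E) R, ∀ y ∈ ball (0:E) R,
      ‖p x m - p y m‖ ≤ C * A * ‖x - y‖ ^ α := by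
    intro x hx y hy
    have := hk m le_rfl x hx y hy
    rw [(hP x hx).iteratedFDeriv_const y x] at this
    simpa using this
  have hderiv : ∀ j < m, ∀ x ∈ ball (0:E) R,
      HasFDerivWithinAt (fun y => p y j) (p x (j+1)).curryLeft (ball (0:E) R) x := by
    intro j hj x hx
    have h1 : HasFDerivAt (iteratedFDeriv ℝ j (P x)) (p x (j+1)).curryLeft x := by
      have hd : DifferentiableAt ℝ (iteratedFDeriv ℝ j (P x)) x :=
        (((hP x hx).contDiff (j+1)).differentiable_iteratedFDeriv
          (by exact_mod_cast Nat.lt_succ_self j)) x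
      have := hd.hasFDerivAt
      rw [fderiv_iteratedFDeriv] at this
      exact this
    have h2 : HasFDerivWithinAt (fun y => p y j - iteratedFDeriv ℝ j (P x) y)
        (0 : E →L[ℝ] _) (ball (0:E) R) x := by
      apply hasFDerivWithinAt_zero_of_bound (C := C * A + 1) (β := m + α - j)
      · have : (j:ℝ) + 1 ≤ m := by exact_mod_cast hj
        linarith
      · positivity
      · intro y hy
        rw [norm_sub_rev]
        refine (hk j hj.le x hx y hy).trans ?_
        apply mul_le_mul_of_nonneg_right (by linarith) (by positivity)
      · simp [hp]
    have h3 := h1.hasFDerivWithinAt (s := ball (0:E) R) |>.add h2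
    rw [add_zero] at h3
    refine h3.congr_of_eventuallyEq ?_ (by simp)
    filter_upwards with y
    simp
  have hT : HasFTaylorSeriesUpToOn m u p (ball (0:E) R) := by
    refine ⟨?_, ?_, ?_⟩
    · intro x hx
      have := hu x hx x hx
      rw [sub_self, norm_zero, Real.zero_rpow (by positivity), mul_zero] at this
      have h2 : u x = P x x := sub_eq_zero.1 (abs_nonpos_iff.1 this)
      rw [h2]
      simp [hp, ContinuousMultilinearMap.curry0]
    · intro j hj x hx
      exact hderiv j (by exact_mod_cast hj) x hx
    · intro j hj
      have hj' : j ≤ m := by exact_mod_cast hj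
      rcases hj'.lt_or_eq with hlt | rfl
      · intro x hx
        exact (hderiv j hlt x hx).continuousWithinAt
      · intro x hx
        have ht : Filter.Tendsto (fun y : E => C * A * ‖y - x‖ ^ α)
            (nhdsWithin x (ball (0:E) R)) (nhds 0) := by
          have : ContinuousAt (fun y : E => C * A * ‖y - x‖ ^ α) x := by
            apply ContinuousAt.mul continuousAt_const
            apply ContinuousAt.rpow_const (by fun_prop)
            right; linarith
          have h2 := this.tendsto
          simp only [sub_self, norm_zero] at h2
          rw [Real.zero_rpow (by linarith), mul_zero] at h2
          exact h2.mono_left nhdsWithin_le_nhds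
        rw [ContinuousWithinAt, tendsto_iff_norm_sub_tendsto_zero]
        refine squeeze_zero' (Filter.Eventually.of_forall fun _ => norm_nonneg _) ?_ ht
        filter_upwards [self_mem_nhdsWithin] with y hy
        exact holder y hy x hx
  have heq : ∀ x ∈ ball (0:E) R, iteratedFDeriv ℝ m u x = p x m := by
    intro x hx
    rw [hT.eq_iteratedFDerivWithin_of_uniqueDiffOn le_rfl isOpen_ball.uniqueDiffOn hx,
      iteratedFDerivWithin_of_isOpen m isOpen_ball hx]
  refine ⟨hT.contDiffOn, heq, ?_⟩
  intro x hx y hy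
  rw [heq x hx, heq y hy]
  exact holder x hx y hy

end Bernstein



abbrev Eu (n : ℕ) := EuclideanSpace ℝ (Fin n)

section Radial

lemma rpow_weight {n : ℕ} (hn : 1 ≤ n) (a y : ℝ) (hy : 0 < y) :
    y ^ (n - 1) • y ^ (a - n) = y ^ (a - 1) := by
  rw [smul_eq_mul, ← Real.rpow_natCast, ← Real.rpow_add hy]
  congr 1
  push_cast [hn]; ring

lemma radial_in (n : ℕ) (hn : 1 ≤ n) (s : ℝ) (hs : 0 < s) : ∃ C > 0, ∀ r : ℝ, 0 < r →
    IntegrableOn (fun ξ : Eu n => ‖ξ‖ ^ (s - n)) (ball 0 r) ∧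
    ∫ ξ in ball (0 : Eu n) r, ‖ξ‖ ^ (s - n) = C * r ^ s := by
  haveI : Nonempty (Fin n) := ⟨⟨0, hn⟩⟩
  refine ⟨n * (volume.real (ball (0 : Eu n) 1)) * (1 / s), ?_, ?_⟩
  · have : 0 < volume.real (ball (0 : Eu n) 1) :=
      ENNReal.toReal_pos (measure_ball_pos _ _ one_pos).ne' measure_ball_lt_top.ne
    have : (0:ℝ) < n := by exact_mod_cast hn
    positivity
  intro r hr
  have hcongr : Set.EqOn (fun y : ℝ => y ^ (n - 1) • y ^ (s - n)) (fun y => y ^ (s - 1))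
      (Set.Ioo 0 r) := fun y hy => rpow_weight hn s y hy.1
  have hintg : IntegrableOn (fun y : ℝ => y ^ (s - 1)) (Set.Ioo 0 r) := by
    have := (intervalIntegral.intervalIntegrable_rpow' (a := 0) (b := r) (r := s - 1)
      (by linarith)).1
    exact this.mono_set Set.Ioo_subset_Ioc_self
  constructor
  · rw [integrableOn_fun_norm_addHaar volume (f := fun y => y ^ (s - n)), finrank_euclideanSpace_fin]
    exact hintg.congr_fun hcongr.symm measurableSet_Ioo
  · rw [← integral_indicator measurableSet_ball]
    have e : (ball (0 : Eu n) r).indicator (fun ξ => ‖ξ‖ ^ (s - n)) =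
        fun ξ => (Set.Iio r).indicator (fun y : ℝ => y ^ (s - n)) ‖ξ‖ := by
      ext ξ; simp [Set.indicator]
    rw [e, integral_fun_norm_addHaar volume, finrank_euclideanSpace_fin]
    have e2 : ∫ y in Set.Ioi (0:ℝ), y ^ (n - 1) • (Set.Iio r).indicator (fun y : ℝ => y ^ (s - n)) y =
        ∫ y in Set.Ioo (0:ℝ) r, y ^ (s - 1) := by
      rw [← integral_indicator measurableSet_Ioi, ← integral_indicator measurableSet_Ioo]
      congr 1
      ext y
      by_cases h0 : 0 < y <;> by_cases h1 : y < r <;> simp [Set.indicator, h0, h1]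
      simpa using rpow_weight hn s y h0
    rw [e2, integral_Ioc_eq_integral_Ioo.symm, ← intervalIntegral.integral_of_le hr.le,
      integral_rpow (Or.inl (by linarith))]
    simp only [sub_add_cancel, Real.zero_rpow hs.ne', nsmul_eq_mul, smul_eq_mul]
    ring

lemma radial_out (n : ℕ) (hn : 1 ≤ n) (s : ℝ) (hs : 0 < s) : ∃ C > 0, ∀ r : ℝ, 0 < r →
    IntegrableOn (fun ξ : Eu n => ‖ξ‖ ^ (-s - n)) (ball 0 r)ᶜ ∧
    ∫ ξ in (ball (0 : Eu n) r)ᶜ, ‖ξ‖ ^ (-s - n) = C * r ^ (-s) := by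
  haveI : Nonempty (Fin n) := ⟨⟨0, hn⟩⟩
  refine ⟨n * (volume.real (ball (0 : Eu n) 1)) * (1 / s), ?_, ?_⟩
  · have : 0 < volume.real (ball (0 : Eu n) 1) :=
      ENNReal.toReal_pos (measure_ball_pos _ _ one_pos).ne' measure_ball_lt_top.ne
    have : (0:ℝ) < n := by exact_mod_cast hn
    positivity
  intro r hr
  have e : ((ball (0 : Eu n) r)ᶜ).indicator (fun ξ => ‖ξ‖ ^ (-s - n)) =
        fun ξ => (Set.Ici r).indicator (fun y : ℝ => y ^ (-s - n)) ‖ξ‖ := by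
      ext ξ; simp [Set.indicator]
  have e3 : (Set.Ioi (0:ℝ)).indicator
      (fun y => y ^ (n - 1) • (Set.Ici r).indicator (fun y : ℝ => y ^ (-s - n)) y) =
      (Set.Ici r).indicator (fun y => y ^ (-s - 1)) := by
    ext y
    by_cases h1 : r ≤ y
    · have h0 : 0 < y := hr.trans_le h1
      simp only [Set.indicator, Set.mem_Ioi, Set.mem_Ici, h0, h1, if_true]
      exact rpow_weight hn _ y h0
    · simp [Set.indicator, h1]
  constructor
  · rw [← integrable_indicator_iff measurableSet_ball.compl, e,
      integrable_fun_norm_addHaar volume, finrank_euclideanSpace_fin,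
      ← integrable_indicator_iff measurableSet_Ioi, e3, integrable_indicator_iff measurableSet_Ici,
      integrableOn_Ici_iff_integrableOn_Ioi]
    exact integrableOn_Ioi_rpow_of_lt (by linarith) hr
  · rw [← integral_indicator measurableSet_ball.compl, e, integral_fun_norm_addHaar volume,
      finrank_euclideanSpace_fin, ← integral_indicator measurableSet_Ioi, e3,
      integral_indicator measurableSet_Ici, integral_Ici_eq_integral_Ioi,
      integral_Ioi_rpow_of_lt (by linarith) hr]
    simp only [sub_add_cancel, nsmul_eq_mul, smul_eq_mul]
    field_simp

end Radial



section Kernel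

/-- The unnormalised kernel. -/
def KK (n : ℕ) (x : Eu n) : ℝ := ‖x‖ ^ ((2 : ℝ) - n)

lemma KK_nonneg {n : ℕ} (x : Eu n) : 0 ≤ KK n x := Real.rpow_nonneg (norm_nonneg _) _

lemma KK_contDiffAt {n : ℕ} {x : Eu n} (hx : x ≠ 0) (N : WithTop ℕ∞) : ContDiffAt ℝ N (KK n) x :=
  (contDiffAt_id.norm ℝ hx).rpow_const_of_ne (by simpa using hx)

lemma KK_contDiffOn {n : ℕ} (N : WithTop ℕ∞) : ContDiffOn ℝ N (KK n) {0}ᶜ :=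
  fun _ hx => (KK_contDiffAt hx N).contDiffWithinAt

lemma KK_deriv_continuousOn {n : ℕ} (j : ℕ) :
    ContinuousOn (iteratedFDeriv ℝ j (KK n)) {0}ᶜ := by
  have := (KK_contDiffOn (n := n) (j : WithTop ℕ∞)).continuousOn_iteratedFDerivWithin le_rfl
    isOpen_compl_singleton.uniqueDiffOn
  exact this.congr fun x hx => (iteratedFDerivWithin_of_isOpen j isOpen_compl_singleton hx).symm

lemma KK_deriv_bound (n : ℕ) (j : ℕ) : ∃ C > 0, ∀ ξ : Eu n, ξ ≠ 0 →
    ‖iteratedFDeriv ℝ j (KK n) ξ‖ ≤ C * ‖ξ‖ ^ ((2:ℝ) - n - j) := by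
  have hcpt : IsCompact (sphere (0 : Eu n) 1) := isCompact_sphere _ _
  obtain ⟨C, hC⟩ := hcpt.exists_bound_of_continuousOn
    ((KK_deriv_continuousOn (n := n) j).mono (fun x hx => by
      rw [mem_sphere_zero_iff_norm] at hx
      intro h
      rw [Set.mem_singleton_iff] at h
      simp [h] at hx))
  refine ⟨|C| + 1, by positivity, fun ξ hξ => ?_⟩
  have ht : 0 < ‖ξ‖ := norm_pos_iff.2 hξ
  set t := ‖ξ‖ with htdef
  set g : Eu n ≃L[ℝ] Eu n := ContinuousLinearEquiv.smulLeft (Units.mk0 t⁻¹ (by positivity)) with hg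
  have hgx : ∀ x, g x = t⁻¹ • x := fun x => rfl
  have hK : KK n = fun z => t ^ ((2:ℝ) - n) • (KK n ∘ g) z := by
    ext z
    simp only [KK, Function.comp_apply, hgx, norm_smul, norm_inv, Real.norm_of_nonneg ht.le,
      smul_eq_mul]
    rw [Real.mul_rpow (by positivity) (norm_nonneg _), ← mul_assoc, Real.inv_rpow ht.le,
      mul_inv_cancel₀ (by positivity), one_mul]
  have hω : ‖g ξ‖ = 1 := by
    rw [hgx, norm_smul, norm_inv, Real.norm_of_nonneg ht.le, ← htdef, inv_mul_cancel₀ ht.ne']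
  have hω0 : g ξ ≠ 0 := by intro h; simp [h] at hω
  have hsm : ContDiffAt ℝ j (KK n ∘ g) ξ :=
    (KK_contDiffAt hω0 j).comp ξ g.contDiff.contDiffAt
  have h1 : iteratedFDeriv ℝ j (KK n ∘ g) ξ =
      (iteratedFDeriv ℝ j (KK n) (g ξ)).compContinuousLinearMap fun _ => g := by
    have := g.iteratedFDerivWithin_comp_right (KK n) (s := Set.univ) uniqueDiffOn_univ
      (x := ξ) (Set.mem_univ _) j
    simpa [iteratedFDerivWithin_univ] using this
  have hgn : ‖(g : Eu n →L[ℝ] Eu n)‖ ≤ t⁻¹ := by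
    refine ContinuousLinearMap.opNorm_le_bound _ (by positivity) fun x => ?_
    change ‖t⁻¹ • x‖ ≤ _
    rw [norm_smul, norm_inv, Real.norm_of_nonneg ht.le]
  rw [hK, iteratedFDeriv_const_smul_apply' hsm, h1, norm_smul, Real.norm_of_nonneg (by positivity)]
  have h2 := (iteratedFDeriv ℝ j (KK n) (g ξ)).norm_compContinuousLinearMap_le
    (fun _ => (g : Eu n →L[ℝ] Eu n))
  have h3 : ∏ _i : Fin j, ‖(g : Eu n →L[ℝ] Eu n)‖ ≤ t⁻¹ ^ j := by
    rw [Finset.prod_const, Finset.card_univ, Fintype.card_fin]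
    exact pow_le_pow_left₀ (norm_nonneg _) hgn j
  have h4 : ‖iteratedFDeriv ℝ j (KK n) (g ξ)‖ ≤ |C| + 1 := by
    have := hC (g ξ) (by simp [hω])
    have := le_abs_self C
    linarith
  have e : t ^ ((2:ℝ) - n - j) = t ^ ((2:ℝ) - n) * t⁻¹ ^ j := by
    rw [Real.rpow_sub ht _ (j:ℝ), Real.rpow_natCast, inv_pow, div_eq_mul_inv]
  rw [e]
  calc _ ≤ t ^ ((2:ℝ) - n) * ((|C| + 1) * t⁻¹ ^ j) := by
        apply mul_le_mul_of_nonneg_left _ (by positivity)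
        refine h2.trans (mul_le_mul h4 h3 (Finset.prod_nonneg fun _ _ => norm_nonneg _)
          (by positivity))
    _ = _ := by ring

lemma KK_taylor (n m : ℕ) (hn : 2 ≤ n) : ∃ C > 0, ∀ ξ h : Eu n, ξ ≠ 0 → ‖h‖ ≤ ‖ξ‖ / 2 →
    |KK n (ξ + h) - ∑ j ∈ Finset.range (m + 1),
      ((j.factorial : ℝ)⁻¹) * iteratedFDeriv ℝ j (KK n) ξ (fun _ => h)| ≤
    C * ‖h‖ ^ (m + 1) * ‖ξ‖ ^ ((1:ℝ) - n - m) := by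
  obtain ⟨C, hC, hb⟩ := KK_deriv_bound n (m + 1)
  set p : ℝ := (2:ℝ) - n - (m + 1 : ℕ) with hp
  have hp0 : p ≤ 0 := by
    have : (2:ℝ) ≤ n := by exact_mod_cast hn
    rw [hp]; push_cast
    have : (0:ℝ) ≤ m := by positivity
    linarith
  refine ⟨3 * C * (1 / 2) ^ p, by positivity, fun ξ h hξ hh => ?_⟩
  have ht : 0 < ‖ξ‖ := norm_pos_iff.2 hξ
  have hlow : ∀ t ∈ Set.Icc (0:ℝ) 1, 1 / 2 * ‖ξ‖ ≤ ‖ξ + t • h‖ := by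
    intro t htt
    have h1 : ‖t • h‖ ≤ ‖ξ‖ / 2 := by
      rw [norm_smul, Real.norm_of_nonneg htt.1]
      exact (mul_le_of_le_one_left (norm_nonneg _) htt.2).trans hh
    have h2 := norm_sub_norm_le ξ (-(t • h))
    rw [norm_neg, sub_neg_eq_add] at h2
    linarith
  have hne : ∀ t ∈ Set.Icc (0:ℝ) 1, ξ + t • h ≠ 0 := fun t htt h0 => by
    have := hlow t htt
    rw [h0, norm_zero] at this; linarith
  set M : ℝ := C * ((1 / 2) ^ p * ‖ξ‖ ^ p) with hM
  have hM0 : 0 ≤ M := by positivity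
  have hD : ∀ t ∈ Set.Icc (0:ℝ) 1, ‖iteratedFDeriv ℝ (m + 1) (KK n) (ξ + t • h)‖ ≤ M := by
    intro t htt
    refine (hb _ (hne t htt)).trans ?_
    apply mul_le_mul_of_nonneg_left _ hC.le
    rw [← Real.mul_rpow (by norm_num) ht.le]
    exact Real.rpow_le_rpow_of_nonpos (by positivity) (hlow t htt) hp0
  have hD0 : ‖iteratedFDeriv ℝ (m + 1) (KK n) ξ‖ ≤ M := by simpa using hD 0 (by simp)
  have key := taylor_bound (m + 1) isOpen_compl_singleton (KK_contDiffOn (n := n) (m + 1 : ℕ))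
    (x := ξ) (v := h) (A := 2 * M) (α := 0) (by positivity) le_rfl (fun t htt => hne t htt)
    (fun t htt => by
      rw [Real.rpow_zero, mul_one]
      refine (norm_sub_le _ _).trans ?_
      linarith [hD t htt])
  rw [Finset.sum_range_succ, add_zero, Real.rpow_natCast, Real.norm_eq_abs] at key
  simp only [smul_eq_mul] at key
  have hlast : |((m + 1).factorial : ℝ)⁻¹ * iteratedFDeriv ℝ (m + 1) (KK n) ξ (fun _ => h)| ≤
      M * ‖h‖ ^ (m + 1) := by
    rw [abs_mul]
    have h1 : |((m + 1).factorial : ℝ)⁻¹| ≤ 1 := by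
      rw [abs_of_nonneg (by positivity)]
      apply inv_le_one_of_one_le₀
      exact_mod_cast Nat.succ_le_of_lt (Nat.factorial_pos _)
    have h2 := (iteratedFDeriv ℝ (m + 1) (KK n) ξ).le_opNorm (fun _ => h)
    rw [Finset.prod_const, Finset.card_univ, Fintype.card_fin, Real.norm_eq_abs] at h2
    calc _ ≤ 1 * (‖iteratedFDeriv ℝ (m + 1) (KK n) ξ‖ * ‖h‖ ^ (m + 1)) :=
          mul_le_mul h1 h2 (abs_nonneg _) zero_le_one
      _ ≤ _ := by
          rw [one_mul]
          exact mul_le_mul_of_nonneg_right hD0 (by positivity)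
  have hpe : (1:ℝ) - n - m = p := by rw [hp]; push_cast; ring
  rw [hpe]
  have hfin : 3 * C * (1 / 2) ^ p * ‖h‖ ^ (m + 1) * ‖ξ‖ ^ p = 3 * M * ‖h‖ ^ (m + 1) := by
    rw [hM]; ring
  rw [hfin]
  rw [abs_le] at key hlast ⊢
  constructor <;> linarith [key.1, key.2, hlast.1, hlast.2]

end Kernel



section Expand

lemma KK_trans (n : ℕ) (hn : 1 ≤ n) : ∃ C > 0, ∀ ρ : ℝ, 0 < ρ → ∀ h : Eu n,
    IntegrableOn (fun ξ => KK n (ξ + h)) (ball 0 ρ) ∧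
    ∫ ξ in ball (0 : Eu n) ρ, KK n (ξ + h) ≤ C * (ρ + ‖h‖) ^ 2 := by
  obtain ⟨C, hC, H⟩ := radial_in n hn 2 (by norm_num)
  refine ⟨C, hC, fun ρ hρ h => ?_⟩
  have hρ' : 0 < ρ + ‖h‖ := by positivity
  obtain ⟨h1, h2⟩ := H _ hρ'
  set G : Eu n → ℝ := (ball (0 : Eu n) (ρ + ‖h‖)).indicator (KK n) with hG
  have hGi : Integrable G := (integrable_indicator_iff measurableSet_ball).2 h1
  have hGt : Integrable (fun ξ => G (ξ + h)) := hGi.comp_add_right h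
  have heq : ∀ ξ ∈ ball (0 : Eu n) ρ, G (ξ + h) = KK n (ξ + h) := by
    intro ξ hξ
    rw [mem_ball_zero_iff] at hξ
    rw [hG, Set.indicator_of_mem]
    rw [mem_ball_zero_iff]
    exact (norm_add_le _ _).trans_lt (by linarith)
  constructor
  · exact (hGt.integrableOn (s := ball 0 ρ)).congr_fun heq measurableSet_ball
  · rw [← setIntegral_congr_fun measurableSet_ball heq]
    have hG0 : ∀ ξ, 0 ≤ G (ξ + h) := fun ξ => Set.indicator_nonneg (fun _ _ => KK_nonneg _) _
    refine (setIntegral_le_integral hGt (Filter.Eventually.of_forall hG0)).trans ?_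
    rw [integral_add_right_eq_self G h, hG, integral_indicator measurableSet_ball]
    refine (le_of_eq h2).trans (le_of_eq ?_)
    congr 1
    exact_mod_cast Real.rpow_natCast (ρ + ‖h‖) 2

lemma KK_sub (n : ℕ) (hn : 1 ≤ n) : ∃ C > 0, ∀ R : ℝ, 0 < R → ∀ x : Eu n,
    IntegrableOn (fun y => KK n (x - y)) (ball 0 R) ∧
    ∫ y in ball (0 : Eu n) R, KK n (x - y) ≤ C * (R + ‖x‖) ^ 2 := by
  obtain ⟨C, hC, H⟩ := KK_trans n hn
  refine ⟨C, hC, fun R hR x => ?_⟩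
  have := H R hR (-x)
  have e : (fun ξ : Eu n => KK n (ξ + -x)) = fun y => KK n (x - y) := by
    ext y; rw [← sub_eq_add_neg]; simp only [KK, norm_sub_rev]
  rw [norm_neg, e] at this
  exact this

lemma KK_deriv_aesm {n : ℕ} (hn : 1 ≤ n) (j : ℕ) :
    AEStronglyMeasurable (iteratedFDeriv ℝ j (KK n)) (volume : Measure (Eu n)) := by
  have : Nonempty (Fin n) := ⟨⟨0, hn⟩⟩
  have h := (KK_deriv_continuousOn (n := n) j).aestronglyMeasurable (μ := volume)
    (measurableSet_singleton (0 : Eu n)).compl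
  rwa [restrict_compl_singleton] at h

lemma ae_ne_zero {n : ℕ} (hn : 1 ≤ n) : ∀ᵐ ξ : Eu n, ξ ≠ 0 := by
  have : Nonempty (Fin n) := ⟨⟨0, hn⟩⟩
  exact Measure.ae_ne volume 0

lemma expand (n k : ℕ) (hn : 3 ≤ n) (α : ℝ) (hα0 : 0 < α) (hα1 : α < 1) : ∃ C > 0,
    ∀ (ρ : ℝ) (g : Eu n → ℝ) (M : ℝ), 0 < ρ → 0 ≤ M → AEStronglyMeasurable g volume →
    (∀ ξ, |g ξ| ≤ M * ‖ξ‖ ^ (k + α)) → (∀ ξ, ξ ∉ ball (0 : Eu n) ρ → g ξ = 0) →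
    ∃ P : Eu n → ℝ, PolyDeg (k + 2) P ∧
      ∀ h, |(∫ ξ, KK n (ξ + h) * g ξ) - P h| ≤ C * M * ‖h‖ ^ ((k + 2 : ℕ) + α) := by
  have hn1 : 1 ≤ n := by omega
  obtain ⟨CT, hCT, HT⟩ := KK_taylor n (k + 2) (by omega)
  choose CD hCD HD using fun j => KK_deriv_bound n j
  obtain ⟨CK, hCK, HK⟩ := KK_trans n hn1
  have hspos : ∀ j ∈ Finset.range (k + 3), (0:ℝ) < k + 2 + α - j := by
    intro j hj
    have : j ≤ k + 2 := by have := Finset.mem_range.1 hj; omega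
    have : (j:ℝ) ≤ k + 2 := by exact_mod_cast this
    linarith
  have hI : ∀ j : ℕ, ∃ C > 0, j ∈ Finset.range (k + 3) → ∀ r : ℝ, 0 < r →
      IntegrableOn (fun ξ : Eu n => ‖ξ‖ ^ ((k + 2 + α - j : ℝ) - n)) (ball 0 r) ∧
      ∫ ξ in ball (0 : Eu n) r, ‖ξ‖ ^ ((k + 2 + α - j : ℝ) - n) = C * r ^ (k + 2 + α - j : ℝ) := by
    intro j
    by_cases hj : j ∈ Finset.range (k + 3)
    · obtain ⟨C, hC, h⟩ := radial_in n hn1 _ (hspos j hj)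
      exact ⟨C, hC, fun _ => h⟩
    · exact ⟨1, one_pos, fun h => absurd h hj⟩
  choose CI hCI HI using hI
  obtain ⟨CO, hCO, HO⟩ := radial_out n hn1 (1 - α) (by linarith)
  have hsum0 : 0 ≤ ∑ j ∈ Finset.range (k + 3), CD j * (CI j * 2 ^ (k + 2 + α - j : ℝ)) :=
    Finset.sum_nonneg fun j _ => by have := hCD j; have := hCI j; positivity
  refine ⟨2 ^ (k + α) * (CK * 9) +
    ∑ j ∈ Finset.range (k + 3), CD j * (CI j * 2 ^ (k + 2 + α - j : ℝ)) +
    CT * (CO * 2 ^ (-(1 - α))), by positivity, ?_⟩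
  intro ρ g M hρ hM hgm hgb hgs
  -- pointwise bounds for each Taylor coefficient
  have hcoef : ∀ j (ξ : Eu n), ξ ≠ 0 → ‖g ξ • iteratedFDeriv ℝ j (KK n) ξ‖ ≤
      M * CD j * ‖ξ‖ ^ ((k + 2 + α - j : ℝ) - n) := by
    intro j ξ hξ
    have ht : 0 < ‖ξ‖ := norm_pos_iff.2 hξ
    rw [norm_smul, Real.norm_eq_abs]
    have e : ‖ξ‖ ^ ((k + 2 + α - j : ℝ) - n) = ‖ξ‖ ^ (k + α) * ‖ξ‖ ^ ((2:ℝ) - n - j) := by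
      rw [← Real.rpow_add ht]; congr 1; ring
    rw [e]
    calc _ ≤ (M * ‖ξ‖ ^ (k + α)) * (CD j * ‖ξ‖ ^ ((2:ℝ) - n - j)) :=
          mul_le_mul (hgb ξ) (HD j ξ hξ) (norm_nonneg _) (by positivity)
      _ = _ := by ring
  have hcoefI : ∀ j ∈ Finset.range (k + 3),
      Integrable (fun ξ => g ξ • iteratedFDeriv ℝ j (KK n) ξ) := by
    intro j hj
    have h1 := (HI j hj ρ hρ).1
    have h2 : Integrable ((ball (0 : Eu n) ρ).indicator
        (fun ξ => M * CD j * ‖ξ‖ ^ ((k + 2 + α - j : ℝ) - n))) :=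
      (integrable_indicator_iff measurableSet_ball).2 (h1.const_mul _)
    refine h2.mono' (hgm.smul (KK_deriv_aesm hn1 j)) ?_
    filter_upwards [ae_ne_zero hn1] with ξ hξ
    by_cases hb : ξ ∈ ball (0 : Eu n) ρ
    · rw [Set.indicator_of_mem hb]
      exact hcoef j ξ hξ
    · rw [Set.indicator_of_notMem hb, hgs ξ hb]; simp
  set A : (j : ℕ) → ContinuousMultilinearMap ℝ (fun _ : Fin j => Eu n) ℝ := fun j =>
    ∫ ξ, g ξ • iteratedFDeriv ℝ j (KK n) ξ with hA
  set P : Eu n → ℝ := fun h => ∑ j ∈ Finset.range (k + 3),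
    ((j.factorial : ℝ)⁻¹) • A j (fun _ => h - 0) with hP
  refine ⟨P, ?_, ?_⟩
  · apply PolyDeg.sum
    intro j hj
    exact ((PolyDeg.diag j (A j) 0).mono (by have := Finset.mem_range.1 hj; omega)).smul _
  intro h
  have hmain : Integrable (fun ξ => KK n (ξ + h) * g ξ) := by
    have h1 := (HK ρ hρ h).1
    have h2 : Integrable ((ball (0 : Eu n) ρ).indicator
        (fun ξ => KK n (ξ + h) * (M * ρ ^ (k + α)))) :=
      (integrable_indicator_iff measurableSet_ball).2 (h1.mul_const _)
    refine h2.mono' ?_ ?_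
    · refine AEStronglyMeasurable.mul ?_ hgm
      apply Measurable.aestronglyMeasurable
      unfold KK
      fun_prop
    · filter_upwards with ξ
      by_cases hb : ξ ∈ ball (0 : Eu n) ρ
      · rw [Set.indicator_of_mem hb, norm_mul, Real.norm_of_nonneg (KK_nonneg _), Real.norm_eq_abs]
        apply mul_le_mul_of_nonneg_left _ (KK_nonneg _)
        refine (hgb ξ).trans (mul_le_mul_of_nonneg_left ?_ hM)
        rw [mem_ball_zero_iff] at hb
        exact Real.rpow_le_rpow (norm_nonneg _) hb.le (by positivity)
      · rw [Set.indicator_of_notMem hb, hgs ξ hb]; simp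
  have hap : ∀ j ∈ Finset.range (k + 3), A j (fun _ => h) =
      ∫ ξ, g ξ * iteratedFDeriv ℝ j (KK n) ξ (fun _ => h) := by
    intro j hj
    have := ((ContinuousMultilinearMap.apply ℝ (fun _ : Fin j => Eu n) ℝ
      (fun _ => h))).integral_comp_comm (hcoefI j hj)
    simp only [ContinuousMultilinearMap.apply_apply, _root_.smul_apply,
      smul_eq_mul] at this
    exact this.symm
  have hapI : ∀ j ∈ Finset.range (k + 3),
      Integrable (fun ξ => g ξ * iteratedFDeriv ℝ j (KK n) ξ (fun _ => h)) := by
    intro j hj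
    have := ((ContinuousMultilinearMap.apply ℝ (fun _ : Fin j => Eu n) ℝ
      (fun _ => h))).integrable_comp (hcoefI j hj)
    simpa using this
  have hrem : (∫ ξ, KK n (ξ + h) * g ξ) - P h = ∫ ξ, g ξ * (KK n (ξ + h) -
      ∑ j ∈ Finset.range (k + 3), ((j.factorial : ℝ)⁻¹) *
        iteratedFDeriv ℝ j (KK n) ξ (fun _ => h)) := by
    have e1 : P h = ∫ ξ, ∑ j ∈ Finset.range (k + 3), ((j.factorial : ℝ)⁻¹) *
        (g ξ * iteratedFDeriv ℝ j (KK n) ξ (fun _ => h)) := by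
      rw [integral_finsetSum _ (fun j hj => (hapI j hj).const_mul _)]
      simp only [hP, sub_zero]
      refine Finset.sum_congr rfl fun j hj => ?_
      rw [hap j hj, smul_eq_mul, integral_const_mul]
    rw [e1, ← integral_sub hmain (integrable_finsetSum _ (fun j hj => (hapI j hj).const_mul _))]
    congr 1
    ext ξ
    rw [mul_sub, Finset.mul_sum, mul_comm]
    congr 1
    exact Finset.sum_congr rfl fun j _ => by ring
  rw [hrem]
  rcases eq_or_ne h 0 with rfl | hh0
  · have : ∀ᵐ ξ : Eu n, g ξ * (KK n (ξ + 0) - ∑ j ∈ Finset.range (k + 3), ((j.factorial : ℝ)⁻¹) *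
        iteratedFDeriv ℝ j (KK n) ξ (fun _ => 0)) = 0 := by
      filter_upwards [ae_ne_zero hn1] with ξ hξ
      have := HT ξ 0 hξ (by simp only [norm_zero]; positivity)
      rw [norm_zero, zero_pow (by omega), mul_zero, zero_mul] at this
      rw [abs_nonpos_iff.1 this, mul_zero]
    rw [integral_congr_ae this]
    have : 0 ≤ CT * (CO * 2 ^ (-(1 - α))) := by positivity
    have : 0 ≤ (2:ℝ) ^ (k + α) * (CK * 9) := by positivity
    simp only [integral_zero, abs_zero]
    positivity
  have hr : 0 < ‖h‖ := norm_pos_iff.2 hh0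
  set r := ‖h‖ with hrdef
  have h2r : 0 < 2 * r := by positivity
  set D1 : Eu n → ℝ := fun ξ => M * (2 * r) ^ (k + α) * KK n (ξ + h) +
    ∑ j ∈ Finset.range (k + 3), M * CD j * r ^ j * ‖ξ‖ ^ ((k + 2 + α - j : ℝ) - n) with hD1
  set D2 : Eu n → ℝ := fun ξ => M * CT * r ^ (k + 3) * ‖ξ‖ ^ (-(1 - α) - n) with hD2
  have hs1I : IntegrableOn (fun ξ => ∑ j ∈ Finset.range (k + 3),
      M * CD j * r ^ j * ‖ξ‖ ^ ((k + 2 + α - j : ℝ) - n)) (ball (0 : Eu n) (2 * r)) :=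
    integrable_finsetSum _ (fun j hj => ((HI j hj _ h2r).1).const_mul _)
  have hD1I : IntegrableOn D1 (ball 0 (2 * r)) := ((HK _ h2r h).1.const_mul _).add hs1I
  have hD2I : IntegrableOn D2 (ball 0 (2 * r))ᶜ := ((HO _ h2r).1).const_mul _
  have hbound := norm_integral_le_of_norm_le (μ := volume)
    (f := fun ξ => g ξ * (KK n (ξ + h) -
      ∑ j ∈ Finset.range (k + 3), ((j.factorial : ℝ)⁻¹) *
        iteratedFDeriv ℝ j (KK n) ξ (fun _ => h)))
    (g := fun ξ => (ball (0 : Eu n) (2 * r)).indicator D1 ξ +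
      ((ball (0 : Eu n) (2 * r))ᶜ).indicator D2 ξ)
    (((integrable_indicator_iff measurableSet_ball).2 hD1I).add
      ((integrable_indicator_iff measurableSet_ball.compl).2 hD2I)) (by
      filter_upwards [ae_ne_zero hn1] with ξ hξ
      have hξ0 : 0 < ‖ξ‖ := norm_pos_iff.2 hξ
      by_cases hb : ξ ∈ ball (0 : Eu n) (2 * r)
      · rw [Set.indicator_of_mem hb, Set.indicator_of_notMem (by simpa using hb), add_zero, mul_sub,
          Finset.mul_sum]
        refine (norm_sub_le _ _).trans (add_le_add ?_ ?_)
        · rw [norm_mul, Real.norm_of_nonneg (KK_nonneg _), Real.norm_eq_abs]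
          apply mul_le_mul_of_nonneg_right _ (KK_nonneg _)
          refine (hgb ξ).trans (mul_le_mul_of_nonneg_left ?_ hM)
          rw [mem_ball_zero_iff] at hb
          exact Real.rpow_le_rpow (norm_nonneg _) hb.le (by positivity)
        · refine (norm_sum_le _ _).trans (Finset.sum_le_sum fun j hj => ?_)
          have h1 : |((j.factorial : ℝ)⁻¹)| ≤ 1 := by
            rw [abs_of_nonneg (by positivity)]
            apply inv_le_one_of_one_le₀
            exact_mod_cast Nat.succ_le_of_lt (Nat.factorial_pos _)
          have h2 := (g ξ • iteratedFDeriv ℝ j (KK n) ξ).le_opNorm (fun _ => h)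
          rw [Finset.prod_const, Finset.card_univ, Fintype.card_fin,
            _root_.smul_apply, smul_eq_mul, ← hrdef] at h2
          have h3 := h2.trans (mul_le_mul_of_nonneg_right (hcoef j ξ hξ) (by positivity))
          have h4 : g ξ * ((j.factorial : ℝ)⁻¹ * iteratedFDeriv ℝ j (KK n) ξ (fun _ => h)) =
            (j.factorial : ℝ)⁻¹ * (g ξ * iteratedFDeriv ℝ j (KK n) ξ (fun _ => h)) := by ring
          rw [h4, norm_mul, Real.norm_eq_abs]
          refine (mul_le_of_le_one_left (norm_nonneg _) h1).trans (h3.trans (le_of_eq ?_))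
          ring
      · rw [Set.indicator_of_notMem hb, Set.indicator_of_mem (by simpa using hb), zero_add]
        have hb' : 2 * r ≤ ‖ξ‖ := by simpa using hb
        have h1 := HT ξ h hξ (by rw [← hrdef]; linarith)
        rw [norm_mul, Real.norm_eq_abs, Real.norm_eq_abs]
        have e : ‖ξ‖ ^ (-(1 - α) - n : ℝ) =
            ‖ξ‖ ^ (k + α) * ‖ξ‖ ^ ((1:ℝ) - n - (k + 2 : ℕ)) := by
          rw [← Real.rpow_add hξ0]; congr 1; push_cast; ring
        simp only [hD2]
        rw [e]
        refine (mul_le_mul (hgb ξ) h1 (abs_nonneg _) (by positivity)).trans (le_of_eq ?_)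
        rw [← hrdef]
        ring)
  rw [Real.norm_eq_abs] at hbound
  refine hbound.trans ?_
  rw [integral_add ((integrable_indicator_iff measurableSet_ball).2 hD1I)
      ((integrable_indicator_iff measurableSet_ball.compl).2 hD2I),
    integral_indicator measurableSet_ball, integral_indicator measurableSet_ball.compl,
    hD1, integral_add ((HK _ h2r h).1.const_mul _) hs1I, integral_const_mul,
    integral_finsetSum _ (fun j hj => ((HI j hj _ h2r).1).const_mul _), hD2, integral_const_mul,
    (HO _ h2r).2]
  have hre : r ^ ((k + 2 : ℕ) + α) = r ^ (k + α) * r ^ 2 := by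
    rw [← Real.rpow_natCast, ← Real.rpow_add hr]; congr 1; push_cast; ring
  have t1 : M * (2 * r) ^ (k + α) * ∫ ξ in ball (0 : Eu n) (2 * r), KK n (ξ + h) ≤
      2 ^ (k + α) * (CK * 9) * M * r ^ ((k + 2 : ℕ) + α) := by
    have := (HK _ h2r h).2
    rw [← hrdef] at this
    refine (mul_le_mul_of_nonneg_left this (by positivity)).trans (le_of_eq ?_)
    rw [Real.mul_rpow (by norm_num) hr.le, hre]
    ring
  have t2 : ∑ j ∈ Finset.range (k + 3), ∫ ξ in ball (0 : Eu n) (2 * r),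
      M * CD j * r ^ j * ‖ξ‖ ^ ((k + 2 + α - j : ℝ) - n) =
      (∑ j ∈ Finset.range (k + 3), CD j * (CI j * 2 ^ (k + 2 + α - j : ℝ))) * M *
        r ^ ((k + 2 : ℕ) + α) := by
    rw [Finset.sum_mul, Finset.sum_mul]
    refine Finset.sum_congr rfl fun j hj => ?_
    rw [integral_const_mul, (HI j hj _ h2r).2, Real.mul_rpow (by norm_num) hr.le]
    have : r ^ ((k + 2 : ℕ) + α) = r ^ j * r ^ (k + 2 + α - j : ℝ) := by
      rw [← Real.rpow_natCast, ← Real.rpow_add hr]; congr 1; push_cast; ring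
    rw [this]; ring
  have t3 : M * CT * r ^ (k + 3) * (CO * (2 * r) ^ (-(1 - α))) =
      CT * (CO * 2 ^ (-(1 - α))) * M * r ^ ((k + 2 : ℕ) + α) := by
    have : r ^ ((k + 2 : ℕ) + α) = r ^ (k + 3) * r ^ (-(1 - α)) := by
      rw [← Real.rpow_natCast, ← Real.rpow_add hr]; congr 1; push_cast; ring
    rw [this, Real.mul_rpow (by norm_num) hr.le]; ring
  rw [t2, t3]
  refine (add_le_add_left (add_le_add_left t1 _) _).trans (le_of_eq ?_)
  ring

end Expand



section Polar

lemma polar {n : ℕ} (hn : 1 ≤ n) (G : Eu n → ℝ) (hG : Integrable G) :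
    ∫ z, G z = ∫ ω : sphere (0 : Eu n) 1, (∫ s in Set.Ioi (0:ℝ), s ^ (n - 1) * G (s • (ω : Eu n)))
      ∂(volume : Measure (Eu n)).toSphere := by
  have : Nonempty (Fin n) := ⟨⟨0, hn⟩⟩
  set f : sphere (0 : Eu n) 1 × Set.Ioi (0:ℝ) → ℝ := fun q => G (q.2.1 • q.1.1) with hf
  have hfc : ∀ x : ({0}ᶜ : Set (Eu n)), f (homeomorphUnitSphereProd (Eu n) x) = G x := by
    intro x
    have hx : ‖(x : Eu n)‖ ≠ 0 := by
      exact norm_ne_zero_iff.2 x.2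
    simp only [hf, homeomorphUnitSphereProd_apply_snd_coe, homeomorphUnitSphereProd_apply_fst_coe,
      smul_smul, mul_inv_cancel₀ hx, one_smul]
  have hmp := (volume : Measure (Eu n)).measurePreserving_homeomorphUnitSphereProd
  have hme := (homeomorphUnitSphereProd (Eu n)).measurableEmbedding
  have h1 : ∫ z, G z = ∫ x : ({0}ᶜ : Set (Eu n)), G x ∂((volume : Measure (Eu n)).comap Subtype.val) := by
    rw [integral_subtype_comap (measurableSet_singleton _).compl G, restrict_compl_singleton]
  have h2 := hmp.integral_comp hme f
  simp only [hfc] at h2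
  have h3 : Integrable f ((volume : Measure (Eu n)).toSphere.prod
      (Measure.volumeIoiPow (Module.finrank ℝ (Eu n) - 1))) := by
    rw [← hmp.integrable_comp_emb hme]
    have : f ∘ (homeomorphUnitSphereProd (Eu n)) = G ∘ Subtype.val := by
      ext x; exact hfc x
    rw [this, ← integrableOn_iff_comap_subtypeVal (measurableSet_singleton _).compl]
    exact hG.integrableOn
  rw [h1, h2, integral_prod f h3]
  congr 1
  ext ω
  simp only [hf, Measure.volumeIoiPow, ENNReal.ofReal, finrank_euclideanSpace_fin]
  rw [integral_withDensity_eq_integral_smul,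
    integral_subtype_comap measurableSet_Ioi
      fun a ↦ Real.toNNReal (a ^ (n - 1)) • G (a • (ω : Eu n)),
    setIntegral_congr_fun measurableSet_Ioi fun x hx ↦ ?_]
  · simp only [NNReal.smul_def]
    rw [Real.coe_toNNReal _ (pow_nonneg hx.out.le _), smul_eq_mul]
  · exact (measurable_subtype_coe.pow_const _).real_toNNReal

/-- finite sums of products `a ω * b x`, with `a` continuous and `b` polynomial -/
inductive SepDeg {E Ω : Type} [NormedAddCommGroup E] [NormedSpace ℝ E] [TopologicalSpace Ω] (m : ℕ) :
    (E → Ω → ℝ) → Prop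
  | prod (a : Ω → ℝ) (b : E → ℝ) (ha : Continuous a) (hb : PolyDeg m b) :
      SepDeg m (fun x ω => a ω * b x)
  | add (W₁ W₂ : E → Ω → ℝ) (h₁ : SepDeg m W₁) (h₂ : SepDeg m W₂) : SepDeg m (fun x ω => W₁ x ω + W₂ x ω)

variable {E Ω : Type} [NormedAddCommGroup E] [NormedSpace ℝ E] [TopologicalSpace Ω]

lemma SepDeg.mul {i j : ℕ} {V W : E → Ω → ℝ} (hV : SepDeg i V) (hW : SepDeg j W) :
    SepDeg (i + j) (fun x ω => V x ω * W x ω) := by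
  induction hV with
  | prod a b ha hb =>
    induction hW with
    | prod a' b' ha' hb' =>
      have := SepDeg.prod (fun ω => a ω * a' ω) (fun x => b x * b' x) (ha.mul ha') (hb.mul hb')
      convert this using 3
      ring
    | add W₁ W₂ _ _ h1 h2 =>
      have := SepDeg.add _ _ h1 h2
      convert this using 3
      ring
  | add V₁ V₂ _ _ h1 h2 =>
    have := SepDeg.add _ _ h1 h2
    convert this using 3
    ring

lemma SepDeg.mono {i j : ℕ} (hij : i ≤ j) {V : E → Ω → ℝ} (hV : SepDeg i V) : SepDeg j V := by
  induction hV with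
  | prod a b ha hb => exact SepDeg.prod a b ha (hb.mono hij)
  | add V₁ V₂ _ _ h1 h2 => exact SepDeg.add _ _ h1 h2

lemma SepDeg.const (m : ℕ) (c : ℝ) : SepDeg m (fun (_ : E) (_ : Ω) => c) := by
  have := SepDeg.prod (Ω := Ω) (m := m) (fun _ => c) (fun _ : E => (1:ℝ)) continuous_const
    (PolyDeg.const m 1)
  simpa using this

lemma SepDeg.sum {m : ℕ} {ι : Type} (s : Finset ι) {V : ι → E → Ω → ℝ} (h : ∀ i ∈ s, SepDeg m (V i)) :
    SepDeg m (fun x ω => ∑ i ∈ s, V i x ω) := by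
  classical
  induction s using Finset.induction_on with
  | empty => simpa using SepDeg.const m 0
  | insert a s ha ih =>
    simp only [Finset.sum_insert ha]
    exact SepDeg.add _ _ (h a (by simp)) (ih fun i hi => h i (by simp [hi]))

lemma SepDeg.cmul {m : ℕ} {V : E → Ω → ℝ} (c : ℝ) (hV : SepDeg m V) : SepDeg m (fun x ω => c * V x ω) := by
  have := (SepDeg.const (E := E) (Ω := Ω) 0 c).mul hV
  rwa [zero_add] at this

lemma SepDeg.sub {m : ℕ} {V W : E → Ω → ℝ} (hV : SepDeg m V) (hW : SepDeg m W) :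
    SepDeg m (fun x ω => V x ω - W x ω) := by
  have := SepDeg.add _ _ hV (hW.cmul (-1))
  convert this using 3
  ring

lemma SepDeg.integral [MeasurableSpace Ω] [OpensMeasurableSpace Ω] [CompactSpace Ω] (μ : Measure Ω)
    [IsFiniteMeasure μ] {m : ℕ} {V : E → Ω → ℝ} (hV : SepDeg m V) :
    (∀ x, Integrable (V x) μ) ∧ PolyDeg m (fun x => ∫ ω, V x ω ∂μ) := by
  induction hV with
  | prod a b ha hb =>
    have hai : Integrable a μ := ha.integrable_of_hasCompactSupport
      (HasCompactSupport.of_compactSpace a)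
    refine ⟨fun x => hai.mul_const _, ?_⟩
    simp only [integral_mul_const]
    exact hb.smul (∫ ω, a ω ∂μ)
  | add V₁ V₂ _ _ h1 h2 =>
    refine ⟨fun x => (h1.1 x).add (h2.1 x), ?_⟩
    have : (fun x => ∫ ω, V₁ x ω + V₂ x ω ∂μ) = fun x => ∫ ω, V₁ x ω ∂μ + ∫ ω, V₂ x ω ∂μ := by
      ext x; exact integral_add (h1.1 x) (h2.1 x)
    rw [this]
    exact h1.2.add h2.2

end Polar



section NewtPoly

/-- power sums of the two roots -/
def powS {n : ℕ} (R : ℝ) : ℕ → Eu n → sphere (0 : Eu n) 1 → ℝ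
  | 0 => fun _ _ => 2
  | 1 => fun x ω => -2 * inner ℝ x (ω : Eu n)
  | (i + 2) => fun x ω => (-2 * inner ℝ x (ω : Eu n)) * powS R (i + 1) x ω -
      (‖x‖ ^ 2 - R ^ 2) * powS R i x ω

lemma sep_inner {n : ℕ} :
    SepDeg 1 (fun (x : Eu n) (ω : sphere (0 : Eu n) 1) => inner ℝ x (ω : Eu n)) := by
  have : (fun (x : Eu n) (ω : sphere (0 : Eu n) 1) => inner ℝ x (ω : Eu n)) =
      fun (x : Eu n) (ω : sphere (0 : Eu n) 1) => ∑ i, (ω : Eu n) i * x i := by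
    ext x ω
    rw [PiLp.inner_apply]
    simp
  rw [this]
  apply SepDeg.sum
  intro i _
  apply SepDeg.prod (fun ω : sphere (0 : Eu n) 1 => (ω : Eu n) i) (fun x : Eu n => x i)
  · fun_prop
  · exact PolyDeg.linear (EuclideanSpace.proj i : Eu n →L[ℝ] ℝ)

lemma sep_normsq {n : ℕ} (R : ℝ) :
    SepDeg 2 (fun (x : Eu n) (_ : sphere (0 : Eu n) 1) => ‖x‖ ^ 2 - R ^ 2) := by
  have h : PolyDeg 2 (fun x : Eu n => inner ℝ x x) :=
    PolyDeg.bilin (a := 1) (b := 1) (innerSL ℝ) (PolyDeg.linear (ContinuousLinearMap.id ℝ (Eu n)))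
      (PolyDeg.linear (ContinuousLinearMap.id ℝ (Eu n)))
  simp only [real_inner_self_eq_norm_sq] at h
  have := SepDeg.prod (Ω := sphere (0 : Eu n) 1) (fun _ => 1) _ continuous_const
    (h.sub (PolyDeg.const 2 (R ^ 2)))
  simpa using this

lemma sep_powS {n : ℕ} (R : ℝ) (i : ℕ) : SepDeg i (powS (n := n) R i) ∧
    SepDeg (i + 1) (powS (n := n) R (i + 1)) := by
  induction i with
  | zero => exact ⟨SepDeg.const 0 2, sep_inner.cmul (-2)⟩
  | succ i ih =>
    refine ⟨ih.2, ?_⟩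
    have h1 := (sep_inner (n := n).cmul (-2)).mul ih.2
    have h2 := (sep_normsq (n := n) R).mul ih.1
    have h3 := (h1.mono (j := i + 2) (by omega)).sub (h2.mono (j := i + 2) (by omega))
    exact h3

lemma powS_eq {n : ℕ} (R : ℝ) (x : Eu n) (ω : sphere (0 : Eu n) 1) (a b : ℝ)
    (h1 : a + b = -2 * inner ℝ x (ω : Eu n)) (h2 : a * b = ‖x‖ ^ 2 - R ^ 2) (i : ℕ) :
    powS R i x ω = a ^ i + b ^ i ∧ powS R (i + 1) x ω = a ^ (i + 1) + b ^ (i + 1) := by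
  induction i with
  | zero => exact ⟨by norm_num [powS], by simp [powS, ← h1]⟩
  | succ i ih =>
    refine ⟨ih.2, ?_⟩
    change (-2 * inner ℝ x (ω : Eu n)) * powS R (i + 1) x ω -
      (‖x‖ ^ 2 - R ^ 2) * powS R i x ω = _
    rw [ih.1, ih.2, ← h1, ← h2]
    ring

/-- Taylor coefficients of a polynomial along the direction `ω` -/
def tco {n : ℕ} (p : Eu n → ℝ) (j : ℕ) (x : Eu n) (ω : Eu n) : ℝ :=
  ((j.factorial : ℝ)⁻¹) • iteratedFDeriv ℝ j p x (fun _ => ω)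

lemma tco_neg {n : ℕ} (p : Eu n → ℝ) (j : ℕ) (x : Eu n) (ω : Eu n) :
    tco p j x (-ω) = (-1) ^ j * tco p j x ω := by
  have := (iteratedFDeriv ℝ j p x).map_smul_univ (fun _ => (-1:ℝ)) (fun _ => ω)
  simp only [Finset.prod_const, Finset.card_univ, Fintype.card_fin, neg_smul, one_smul] at this
  unfold tco
  rw [this]
  simp only [smul_eq_mul]; ring

lemma sep_tco {n d : ℕ} {p : Eu n → ℝ} (hp : PolyDeg d p) (j : ℕ) (hj : j ≤ d) :
    SepDeg (d - j) (fun (x : Eu n) (ω : sphere (0 : Eu n) 1) => tco p j x (ω : Eu n)) := by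
  have hD : PolyDeg (d - j) (iteratedFDeriv ℝ j p) :=
    PolyDeg.iteratedFDeriv j (by rwa [Nat.sub_add_cancel hj])
  have : (fun (x : Eu n) (ω : sphere (0 : Eu n) 1) => tco p j x (ω : Eu n)) =
      fun (x : Eu n) (ω : sphere (0 : Eu n) 1) => (j.factorial : ℝ)⁻¹ * ∑ v : Fin j → Fin n, (∏ i, (ω : Eu n) (v i)) *
        iteratedFDeriv ℝ j p x (fun i => EuclideanSpace.single (v i) 1) := by
    ext x ω
    unfold tco
    rw [smul_eq_mul]
    congr 1
    have hω : (ω : Eu n) = ∑ i, (ω : Eu n) i • EuclideanSpace.single i (1:ℝ) := by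
      have := (EuclideanSpace.basisFun (Fin n) ℝ).sum_repr (ω : Eu n)
      simpa using this.symm
    conv_lhs => rw [hω]
    rw [ContinuousMultilinearMap.map_sum]
    refine Finset.sum_congr rfl fun v _ => ?_
    rw [(iteratedFDeriv ℝ j p x).map_smul_univ (fun i => (ω : Eu n) (v i))
      (fun i => EuclideanSpace.single (v i) (1:ℝ)), smul_eq_mul]
  rw [this]
  apply SepDeg.cmul
  apply SepDeg.sum
  intro v _
  apply SepDeg.prod (fun ω : sphere (0 : Eu n) 1 => ∏ i, (ω : Eu n) (v i))
  · fun_prop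
  · exact hD.clm (ContinuousMultilinearMap.apply ℝ (fun _ : Fin j => Eu n) ℝ
      (fun i => EuclideanSpace.single (v i) 1))

lemma one_side {n d : ℕ} (hn : 3 ≤ n) {p : Eu n → ℝ} (hp : PolyDeg d p) (R : ℝ) (x ω : Eu n)
    (hω : ‖ω‖ = 1) (a : ℝ) (ha : 0 < a) (h : ∀ s : ℝ, 0 < s → (‖x + s • ω‖ < R ↔ s < a)) :
    IntegrableOn (fun s : ℝ => s ^ (n - 1) * (ball (0 : Eu n) R).indicator
      (fun y => KK n (x - y) * p y) (x + s • ω)) (Set.Ioi 0) ∧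
    ∫ s in Set.Ioi (0:ℝ), s ^ (n - 1) * (ball (0 : Eu n) R).indicator
      (fun y => KK n (x - y) * p y) (x + s • ω) =
      ∑ j ∈ Finset.range (d + 1), tco p j x ω * (a ^ (j + 2) / (j + 2)) := by
  have e : ∀ s ∈ Set.Ioi (0:ℝ), s ^ (n - 1) * (ball (0 : Eu n) R).indicator
      (fun y => KK n (x - y) * p y) (x + s • ω) =
      (Set.Iio a).indicator (fun s => ∑ j ∈ Finset.range (d + 1), tco p j x ω * s ^ (j + 1)) s := by
    intro s hs
    have hs0 : 0 < s := hs
    by_cases hsa : s < a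
    · rw [Set.indicator_of_mem (by simpa using (h s hs0).2 hsa), Set.indicator_of_mem (by simpa using hsa)]
      have h1 : KK n (x - (x + s • ω)) = s ^ ((2:ℝ) - n) := by
        unfold KK
        rw [sub_add_cancel_left, norm_neg, norm_smul, hω, mul_one, Real.norm_of_nonneg hs0.le]
      have h2 : s ^ (n - 1) * s ^ ((2:ℝ) - n) = s := by
        have := rpow_weight (n := n) (by omega) 2 s hs0
        rw [smul_eq_mul] at this
        rw [this]; norm_num
      rw [h1, ← mul_assoc, h2, hp.line, Finset.mul_sum]
      refine Finset.sum_congr rfl fun j _ => ?_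
      unfold tco
      simp only [smul_eq_mul]
      ring
    · rw [Set.indicator_of_notMem (by simpa using fun h' => hsa ((h s hs0).1 h')),
        Set.indicator_of_notMem (by simpa using hsa), mul_zero]
  have hset : Set.Ioi (0:ℝ) ∩ Set.Iio a = Set.Ioo 0 a := rfl
  have hintg : IntegrableOn (fun s : ℝ => ∑ j ∈ Finset.range (d + 1), tco p j x ω * s ^ (j + 1))
      (Set.Ioo 0 a) := by
    have : Continuous (fun s : ℝ => ∑ j ∈ Finset.range (d + 1), tco p j x ω * s ^ (j + 1)) := by
      fun_prop
    exact (this.integrableOn_Icc (a := 0) (b := a)).mono_set Set.Ioo_subset_Icc_self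
  constructor
  · refine IntegrableOn.congr_fun ?_ (fun s hs => (e s hs).symm) measurableSet_Ioi
    rw [IntegrableOn, integrable_indicator_iff measurableSet_Iio, IntegrableOn,
      Measure.restrict_restrict measurableSet_Iio, Set.inter_comm, hset]
    exact hintg
  · rw [setIntegral_congr_fun measurableSet_Ioi e, setIntegral_indicator measurableSet_Iio, hset,
      ← integral_Ioc_eq_integral_Ioo, ← intervalIntegral.integral_of_le ha.le,
      intervalIntegral.integral_finsetSum]
    · refine Finset.sum_congr rfl fun j _ => ?_
      rw [intervalIntegral.integral_const_mul, integral_pow]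
      push_cast
      congr 1
      rw [zero_pow (by omega)]
      ring
    · intro j _
      exact Continuous.intervalIntegrable (by fun_prop) _ _

lemma roots_exist {n : ℕ} (R : ℝ) (x : Eu n) (hx : x ∈ ball (0 : Eu n) R) (ω : Eu n) :
    ∃ a b : ℝ, 0 < a ∧ b < 0 ∧ a + b = -2 * inner ℝ x ω ∧
      a * b = ‖x‖ ^ 2 - R ^ 2 := by
  rw [mem_ball_zero_iff] at hx
  set t : ℝ := inner ℝ x ω
  have hδ : 0 < R ^ 2 - ‖x‖ ^ 2 := by nlinarith [norm_nonneg x]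
  set q := Real.sqrt (t ^ 2 + (R ^ 2 - ‖x‖ ^ 2)) with hq
  have hq2 : q ^ 2 = t ^ 2 + (R ^ 2 - ‖x‖ ^ 2) := Real.sq_sqrt (by positivity)
  have hq0 : 0 ≤ q := Real.sqrt_nonneg _
  have habs : |t| < q := by
    rw [← abs_of_nonneg hq0]
    exact sq_lt_sq.1 (by linarith)
  rw [abs_lt] at habs
  refine ⟨-t + q, -t - q, by linarith, by linarith, by ring, ?_⟩
  nlinarith

lemma newt_poly {n d : ℕ} (hn : 3 ≤ n) {p : Eu n → ℝ} (hp : PolyDeg d p) (R : ℝ) (hR : 0 < R) :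
    ∃ Q : Eu n → ℝ, PolyDeg (d + 2) Q ∧ ∀ x ∈ ball (0 : Eu n) R,
      ∫ y in ball (0 : Eu n) R, KK n (x - y) * p y = Q x := by
  set W : Eu n → sphere (0 : Eu n) 1 → ℝ := fun x ω => ∑ j ∈ Finset.range (d + 1),
    (1 / (2 * (j + 2)) : ℝ) * (tco p j x (ω : Eu n) * powS R (j + 2) x ω) with hW
  have hWs : SepDeg (d + 2) W := by
    apply SepDeg.sum
    intro j hj
    have hj' : j ≤ d := by have := Finset.mem_range.1 hj; omega
    exact (((sep_tco hp j hj').mul (sep_powS (n := n) R (j + 2)).1).mono (by omega)).cmul _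
  refine ⟨fun x => ∫ ω, W x ω ∂(volume : Measure (Eu n)).toSphere, (hWs.integral _).2, ?_⟩
  intro x hx
  obtain ⟨CK, _, HK⟩ := KK_sub n (by omega)
  set F0 : Eu n → ℝ := (ball (0 : Eu n) R).indicator (fun y => KK n (x - y) * p y) with hF0
  have hF0i : Integrable F0 := by
    rw [hF0, integrable_indicator_iff measurableSet_ball]
    obtain ⟨C, hC⟩ := (isCompact_closedBall (0 : Eu n) R).exists_bound_of_continuousOn
      (f := p) (hp.contDiff 0).continuous.continuousOn
    refine Integrable.mono' ((HK R hR x).1.mul_const C) ?_ ?_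
    · refine (HK R hR x).1.aestronglyMeasurable.mul ?_
      exact (hp.contDiff 0).continuous.aestronglyMeasurable
    · filter_upwards [ae_restrict_mem measurableSet_ball] with y hy
      rw [norm_mul, Real.norm_of_nonneg (KK_nonneg _)]
      exact mul_le_mul_of_nonneg_left (hC y (ball_subset_closedBall hy)) (KK_nonneg _)
  have hFi : Integrable (fun z => F0 (x + z)) := hF0i.comp_add_left x
  have hFi' : Integrable (fun z => F0 (x + -z)) := hFi.comp_neg
  have h1 : ∫ y in ball (0 : Eu n) R, KK n (x - y) * p y =
      ∫ z, (1 / 2 : ℝ) * (F0 (x + z) + F0 (x + -z)) := by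
    rw [integral_const_mul, integral_add hFi hFi', integral_neg_eq_self (fun z => F0 (x + z)),
      integral_add_left_eq_self F0 x, hF0, integral_indicator measurableSet_ball]
    ring
  rw [h1, polar (by omega) (fun z => (1 / 2 : ℝ) * (F0 (x + z) + F0 (x + -z)))
    ((hFi.add hFi').const_mul _)]
  congr 1
  ext ω
  have hω : ‖(ω : Eu n)‖ = 1 := by simp
  obtain ⟨a, b, ha, hb, hab, hab'⟩ := roots_exist R x hx (ω : Eu n)
  have hnorm : ∀ s : ℝ, ‖x + s • (ω : Eu n)‖ ^ 2 - R ^ 2 = (s - a) * (s - b) := by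
    intro s
    rw [norm_add_sq_real, norm_smul, hω, inner_smul_right, mul_one, Real.norm_eq_abs, sq_abs]
    linear_combination s * hab - hab'
  have hiff : ∀ s : ℝ, (‖x + s • (ω : Eu n)‖ < R ↔ (s - a) * (s - b) < 0) := by
    intro s
    rw [← hnorm s, sub_neg]
    exact (sq_lt_sq₀ (norm_nonneg _) hR.le).symm
  have hA := one_side hn hp R x (ω : Eu n) hω a ha (fun s hs => by
    rw [hiff s]
    constructor
    · intro h; by_contra hc; push Not at hc; nlinarith
    · intro h; nlinarith)
  have hB := one_side hn hp R x (-(ω : Eu n)) (by rw [norm_neg, hω]) (-b) (by linarith) (fun s hs => by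
    rw [smul_neg, ← neg_smul, hiff (-s)]
    constructor
    · intro h; by_contra hc; push Not at hc; nlinarith
    · intro h; nlinarith)
  have e : ∀ s : ℝ, s ^ (n - 1) * ((1 / 2 : ℝ) * (F0 (x + s • (ω : Eu n)) + F0 (x + -(s • (ω : Eu n))))) =
      (1 / 2 : ℝ) * (s ^ (n - 1) * F0 (x + s • (ω : Eu n)) + s ^ (n - 1) * F0 (x + s • -(ω : Eu n))) := by
    intro s; rw [smul_neg]; ring
  simp only [e]
  rw [integral_const_mul, integral_add hA.1 hB.1, hA.2, hB.2, hW, ← Finset.sum_add_distrib,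
    Finset.mul_sum]
  refine Finset.sum_congr rfl fun j _ => ?_
  rw [(powS_eq R x ω a b hab hab' (j + 2)).1, tco_neg]
  have hs : (-1:ℝ) ^ j * (-b) ^ (j + 2) = b ^ (j + 2) := by
    rw [pow_add, pow_add, ← mul_assoc, ← mul_pow]; ring
  have hj : ((j:ℝ) + 2) ≠ 0 := by positivity
  rw [← hs]
  field_simp

end NewtPoly



section CoreEstimate

lemma PolyDeg.comp_sub {E F : Type} [NormedAddCommGroup E] [NormedSpace ℝ E]
    [NormedAddCommGroup F] [NormedSpace ℝ F] {m : ℕ} {q : E → F} (hq : PolyDeg m q) (a : E) :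
    PolyDeg m (fun z => q (z - a)) := by
  induction m generalizing F with
  | zero => obtain ⟨c, rfl⟩ := hq; exact ⟨c, rfl⟩
  | succ m ih =>
    refine ⟨hq.1.comp (differentiable_id.sub_const a), ?_⟩
    have : _root_.fderiv ℝ (fun z => q (z - a)) = fun z => _root_.fderiv ℝ q (z - a) := by
      ext1 z; exact fderiv_comp_sub a
    rw [this]
    exact ih hq.2

/-- Taylor polynomial -/
def tayP {n : ℕ} (f : Eu n → ℝ) (N : ℕ) (x₀ z : Eu n) : ℝ :=
  ∑ j ∈ Finset.range N, ((j.factorial : ℝ)⁻¹) • iteratedFDeriv ℝ j f x₀ (fun _ => z - x₀)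

lemma tayP_poly {n : ℕ} (f : Eu n → ℝ) (N : ℕ) (x₀ : Eu n) : PolyDeg N (tayP f (N + 1) x₀) := by
  apply PolyDeg.sum
  intro j hj
  exact ((PolyDeg.diag j _ x₀).mono (by have := Finset.mem_range.1 hj; omega)).smul _

lemma tayP_continuous {n : ℕ} (f : Eu n → ℝ) (N : ℕ) (x₀ : Eu n) : Continuous (tayP f N x₀) := by
  cases N with
  | zero =>
    have : tayP f 0 x₀ = fun _ => 0 := by ext z; simp [tayP]
    rw [this]; exact continuous_const
  | succ N => exact ((tayP_poly f N x₀).contDiff 0).continuous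

lemma seg_mem {n : ℕ} {R : ℝ} {x y : Eu n} (hx : x ∈ ball (0 : Eu n) R) (hy : y ∈ ball (0 : Eu n) R)
    (t : ℝ) (ht : t ∈ Set.Icc (0:ℝ) 1) : x + t • (y - x) ∈ ball (0 : Eu n) R :=
  (convex_ball (0 : Eu n) R).add_smul_sub_mem hx hy ht

lemma tay_holder {n k : ℕ} {R α H : ℝ} (hα : 0 < α) (hH : 0 ≤ H) {f : Eu n → ℝ}
    (hf : ContDiffOn ℝ k f (ball (0 : Eu n) R))
    (hh : ∀ x ∈ ball (0 : Eu n) R, ∀ y ∈ ball (0 : Eu n) R,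
      ‖iteratedFDeriv ℝ k f x - iteratedFDeriv ℝ k f y‖ ≤ H * ‖x - y‖ ^ α)
    {x y : Eu n} (hx : x ∈ ball (0 : Eu n) R) (hy : y ∈ ball (0 : Eu n) R) :
    |f y - tayP f (k + 1) x y| ≤ H * ‖y - x‖ ^ (k + α) := by
  have := taylor_bound k isOpen_ball hf (x := x) (v := y - x) hH hα.le (seg_mem hx hy)
    (fun t ht => by
      refine (hh _ (seg_mem hx hy t ht) x hx).trans (le_of_eq ?_)
      rw [add_sub_cancel_left, norm_smul, Real.norm_of_nonneg ht.1])
  rw [add_sub_cancel, Real.norm_eq_abs] at this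
  exact this

lemma tay_sup {n k : ℕ} {R S : ℝ} (hR : 0 < R) (hS : 0 ≤ S) {f : Eu n → ℝ}
    (hf : ContDiffOn ℝ k f (ball (0 : Eu n) R))
    (hs : ∀ x ∈ ball (0 : Eu n) R, ‖iteratedFDeriv ℝ k f x‖ ≤ S)
    {y : Eu n} (hy : y ∈ ball (0 : Eu n) R) :
    |f y - tayP f k 0 y| ≤ 3 * S * R ^ k := by
  have h0 : (0 : Eu n) ∈ ball (0 : Eu n) R := by simp [hR]
  have := taylor_bound k isOpen_ball hf (x := 0) (v := y - 0) (A := 2 * S) (α := 0) (by positivity)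
    le_rfl (seg_mem h0 hy)
    (fun t ht => by
      rw [Real.rpow_zero, mul_one]
      refine (norm_sub_le _ _).trans ?_
      linarith [hs _ (seg_mem h0 hy t ht), hs _ h0])
  rw [add_sub_cancel, Real.norm_eq_abs, Finset.sum_range_succ, add_zero, Real.rpow_natCast] at this
  have hyR : ‖y - 0‖ ^ k ≤ R ^ k := by
    apply pow_le_pow_left₀ (norm_nonneg _)
    rw [mem_ball_zero_iff] at hy
    simpa using hy.le
  have hlast : |((k.factorial : ℝ)⁻¹) • iteratedFDeriv ℝ k f 0 (fun _ => y - 0)| ≤ S * ‖y - 0‖ ^ k := by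
    rw [smul_eq_mul, abs_mul]
    have h1 : |(k.factorial : ℝ)⁻¹| ≤ 1 := by
      rw [abs_of_nonneg (by positivity)]
      apply inv_le_one_of_one_le₀
      exact_mod_cast Nat.succ_le_of_lt (Nat.factorial_pos _)
    have h2 := (iteratedFDeriv ℝ k f 0).le_opNorm (fun _ => y - 0)
    rw [Finset.prod_const, Finset.card_univ, Fintype.card_fin, Real.norm_eq_abs] at h2
    refine (mul_le_of_le_one_left (abs_nonneg _) h1).trans (h2.trans ?_)
    exact mul_le_mul_of_nonneg_right (hs _ h0) (by positivity)
  have e : 3 * S * ‖y - 0‖ ^ k ≤ 3 * S * R ^ k := mul_le_mul_of_nonneg_left hyR (by positivity)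
  refine le_trans ?_ e
  unfold tayP
  rw [abs_le] at this hlast ⊢
  constructor <;> linarith [this.1, this.2, hlast.1, hlast.2]

lemma KK_mul_int (n : ℕ) (hn : 1 ≤ n) : ∃ CK > 0, ∀ R : ℝ, 0 < R → ∀ (h : Eu n → ℝ) (C : ℝ),
    0 ≤ C → AEStronglyMeasurable h (volume.restrict (ball (0 : Eu n) R)) →
    (∀ y ∈ ball (0 : Eu n) R, |h y| ≤ C) → ∀ x ∈ ball (0 : Eu n) R,
    IntegrableOn (fun y => KK n (x - y) * h y) (ball 0 R) ∧
    |∫ y in ball (0 : Eu n) R, KK n (x - y) * h y| ≤ CK * R ^ 2 * C := by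
  obtain ⟨CK, hCK, HK⟩ := KK_sub n hn
  refine ⟨CK * 4, by positivity, fun R hR h C hC hm hb x hx => ?_⟩
  have hbd : ∀ᵐ y ∂(volume.restrict (ball (0 : Eu n) R)),
      ‖KK n (x - y) * h y‖ ≤ KK n (x - y) * C := by
    filter_upwards [ae_restrict_mem measurableSet_ball] with y hy
    rw [norm_mul, Real.norm_of_nonneg (KK_nonneg _)]
    exact mul_le_mul_of_nonneg_left (hb y hy) (KK_nonneg _)
  have hi := (HK R hR x).1.mul_const C
  refine ⟨Integrable.mono' hi ((HK R hR x).1.aestronglyMeasurable.mul hm) hbd, ?_⟩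
  have := norm_integral_le_of_norm_le hi hbd
  rw [Real.norm_eq_abs, integral_mul_const] at this
  refine this.trans (mul_le_mul_of_nonneg_right ((HK R hR x).2.trans ?_) hC)
  rw [mem_ball_zero_iff] at hx
  have : (R + ‖x‖) ^ 2 ≤ (2 * R) ^ 2 := pow_le_pow_left₀ (by positivity) (by linarith) 2
  nlinarith

lemma core_abs (n k : ℕ) (hn : 3 ≤ n) (α : ℝ) (hα0 : 0 < α) (hα1 : α < 1) : ∃ C > 0,
    ∀ R : ℝ, 0 < R → ∀ (f : Eu n → ℝ) (S H : ℝ), 0 ≤ S → 0 ≤ H →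
    ContDiffOn ℝ k f (ball (0 : Eu n) R) →
    (∀ x ∈ ball (0 : Eu n) R, ‖iteratedFDeriv ℝ k f x‖ ≤ S) →
    (∀ x ∈ ball (0 : Eu n) R, ∀ y ∈ ball (0 : Eu n) R,
      ‖iteratedFDeriv ℝ k f x - iteratedFDeriv ℝ k f y‖ ≤ H * ‖x - y‖ ^ α) →
    ∀ u : Eu n → ℝ, (u = fun x => ∫ y in ball (0 : Eu n) R, KK n (x - y) * f y) →
    ContDiffOn ℝ (k + 2 : ℕ) u (ball (0 : Eu n) R) ∧
    (∀ x ∈ ball (0 : Eu n) R, ‖iteratedFDeriv ℝ (k + 2) u x‖ ≤ C * (S + R ^ α * H)) ∧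
    (∀ x ∈ ball (0 : Eu n) R, ∀ y ∈ ball (0 : Eu n) R,
      ‖iteratedFDeriv ℝ (k + 2) u x - iteratedFDeriv ℝ (k + 2) u y‖ ≤ C * H * ‖x - y‖ ^ α) := by
  obtain ⟨CE, hCE, HE⟩ := expand n k hn α hα0 hα1
  obtain ⟨CV, hCV, HV⟩ := converse_taylor (E := Eu n) (k + 2) α hα0
  obtain ⟨CK, hCK, HK⟩ := KK_mul_int n (by omega)
  obtain ⟨CB, hCB, HB⟩ := bern (E := Eu n) (k + 2) (k + 2)
  refine ⟨CV * CE + CB * (CE * 2 ^ ((k + 2 : ℕ) + α)) + CB * (CK * 3), by positivity, ?_⟩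
  intro R hR f S H hS hH hf hs hh u hu
  have hfm : AEStronglyMeasurable f (volume.restrict (ball (0 : Eu n) R)) :=
    hf.continuousOn.aestronglyMeasurable measurableSet_ball
  have hnorm2 : ∀ x ∈ ball (0 : Eu n) R, ∀ y ∈ ball (0 : Eu n) R, ‖x - y‖ < 2 * R := by
    intro x hx y hy
    rw [mem_ball_zero_iff] at hx hy
    exact (norm_sub_le _ _).trans_lt (by linarith)
  -- decomposition of the potential
  have hdec : ∀ T : Eu n → ℝ, Continuous T → ∀ M : ℝ, 0 ≤ M →
      (∀ y ∈ ball (0 : Eu n) R, |f y - T y| ≤ M) → ∀ z ∈ ball (0 : Eu n) R,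
      u z = (∫ y in ball (0 : Eu n) R, KK n (z - y) * T y) +
        ∫ y in ball (0 : Eu n) R, KK n (z - y) * (f y - T y) := by
    intro T hT M hM hb z hz
    obtain ⟨C, hC⟩ := (isCompact_closedBall (0 : Eu n) R).exists_bound_of_continuousOn
      (f := T) hT.continuousOn
    have hC' : ∀ y ∈ ball (0 : Eu n) R, |T y| ≤ |C| := fun y hy =>
      (hC y (ball_subset_closedBall hy)).trans (le_abs_self _)
    rw [hu, ← integral_add (HK R hR T |C| (abs_nonneg _) hT.aestronglyMeasurable hC' z hz).1
      (HK R hR (fun y => f y - T y) M hM (hfm.sub hT.aestronglyMeasurable) hb z hz).1]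
    simp only
    congr 1
    ext y
    ring
  -- local polynomial approximations
  have hloc : ∀ x ∈ ball (0 : Eu n) R, ∃ P : Eu n → ℝ, PolyDeg (k + 2) P ∧
      ∀ z ∈ ball (0 : Eu n) R, |u z - P z| ≤ CE * H * ‖z - x‖ ^ ((k + 2 : ℕ) + α) := by
    intro x hx
    set T := tayP f (k + 1) x with hT
    have hTc : Continuous T := tayP_continuous f _ x
    have hTb : ∀ y ∈ ball (0 : Eu n) R, |f y - T y| ≤ H * ‖y - x‖ ^ (k + α) :=
      fun y hy => tay_holder hα0 hH hf hh hx hy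
    have hTb' : ∀ y ∈ ball (0 : Eu n) R, |f y - T y| ≤ H * (2 * R) ^ (k + α) := by
      intro y hy
      refine (hTb y hy).trans (mul_le_mul_of_nonneg_left ?_ hH)
      exact Real.rpow_le_rpow (norm_nonneg _) (hnorm2 y hy x hx).le (by positivity)
    obtain ⟨Q, hQ, hQe⟩ := newt_poly hn (tayP_poly f k x) R hR
    set g : Eu n → ℝ := (ball (0 : Eu n) R).indicator (fun y => f y - T y) with hg
    have hgm : AEStronglyMeasurable g volume :=
      (aestronglyMeasurable_indicator_iff measurableSet_ball).2
        (hfm.sub hTc.aestronglyMeasurable)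
    obtain ⟨P, hP, hPe⟩ := HE (2 * R) (fun ξ => g (x - ξ)) H (by positivity) hH
      (hgm.comp_measurePreserving (Measure.measurePreserving_sub_left volume x))
      (fun ξ => by
        by_cases hb : x - ξ ∈ ball (0 : Eu n) R
        · simp only [hg, Set.indicator_of_mem hb]
          have := hTb _ hb
          rwa [sub_sub_cancel_left, norm_neg] at this
        · simp only [hg, Set.indicator_of_notMem hb, abs_zero]
          positivity)
      (fun ξ hξ => by
        rw [hg, Set.indicator_of_notMem]
        intro hb
        apply hξ
        have := hnorm2 x hx _ hb
        rw [sub_sub_cancel] at this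
        simpa using this)
    refine ⟨fun z => Q z + P (z - x), hQ.add (hP.comp_sub x), ?_⟩
    intro z hz
    have e1 : ∫ ξ, KK n (ξ + (z - x)) * g (x - ξ) =
        ∫ y in ball (0 : Eu n) R, KK n (z - y) * (f y - T y) := by
      have := integral_sub_left_eq_self (fun y => KK n (z - y) * g y) (volume : Measure (Eu n)) x
      have e2 : ∀ ξ : Eu n, z - (x - ξ) = ξ + (z - x) := fun ξ => by abel
      simp only [e2] at this
      rw [this, ← integral_indicator measurableSet_ball]
      congr 1
      ext y
      simp only [hg, Set.indicator]
      split_ifs <;> simp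
    have h2 := hPe (z - x)
    rw [e1] at h2
    rw [hdec T hTc _ (by positivity) hTb' z hz, hQe z hz]
    rwa [add_sub_add_left_eq_sub]
  choose! P hP hPe using hloc
  obtain ⟨v1, v2, v3⟩ := HV R u P (CE * H) (by positivity) hP hPe
  refine ⟨v1, ?_, ?_⟩
  · -- the sup bound
    set T := tayP f k 0 with hT
    have hTc : Continuous T := tayP_continuous f _ 0
    have hTb : ∀ y ∈ ball (0 : Eu n) R, |f y - T y| ≤ 3 * S * R ^ k :=
      fun y hy => tay_sup hR hS hf hs hy
    obtain ⟨Q, hQ, hQe⟩ : ∃ Q : Eu n → ℝ, PolyDeg (k + 1) Q ∧ ∀ z ∈ ball (0 : Eu n) R,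
        ∫ y in ball (0 : Eu n) R, KK n (z - y) * T y = Q z := by
      cases k with
      | zero =>
        refine ⟨fun _ => 0, PolyDeg.const _ _, fun z _ => ?_⟩
        simp [hT, tayP]
      | succ k => exact newt_poly hn (tayP_poly f k 0) R hR
    intro x hx
    rw [v2 x hx]
    have hq := (hP x hx).sub (hQ.mono (Nat.le_succ (k + 1)))
    have hbd : ∀ z ∈ ball (0 : Eu n) R, ‖P x z - Q z‖ ≤
        CE * H * (2 * R) ^ ((k + 2 : ℕ) + α) + CK * R ^ 2 * (3 * S * R ^ k) := by
      intro z hz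
      have h1 := hPe x hx z hz
      have h1' : CE * H * ‖z - x‖ ^ ((k + 2 : ℕ) + α) ≤ CE * H * (2 * R) ^ ((k + 2 : ℕ) + α) := by
        apply mul_le_mul_of_nonneg_left _ (by positivity)
        exact Real.rpow_le_rpow (norm_nonneg _) (hnorm2 z hz x hx).le (by positivity)
      have h2 := (HK R hR (fun y => f y - T y) _ (by positivity)
        (hfm.sub hTc.aestronglyMeasurable) hTb z hz).2
      have h3 := hdec T hTc _ (by positivity) hTb z hz
      rw [hQe z hz] at h3
      rw [← sub_eq_iff_eq_add'.2 h3] at h2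
      rw [Real.norm_eq_abs]
      calc |P x z - Q z| = |(u z - Q z) - (u z - P x z)| := by congr 1; ring
        _ ≤ |u z - Q z| + |u z - P x z| := abs_sub _ _
        _ ≤ _ := by linarith
    have := HB ℝ _ hq 0 R _ hR hbd x (by rw [sub_zero]; exact (mem_ball_zero_iff.1 hx).le)
    have e : iteratedFDeriv ℝ (k + 2) (fun z => P x z - Q z) x =
        iteratedFDeriv ℝ (k + 2) (P x) x - iteratedFDeriv ℝ (k + 2) Q x :=
      iteratedFDeriv_sub_apply (((hP x hx).contDiff _).contDiffAt) ((hQ.contDiff _).contDiffAt)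
    rw [e, hQ.iteratedFDeriv_succ_eq_zero, sub_zero] at this
    refine this.trans ?_
    have e2 : (2 * R) ^ ((k + 2 : ℕ) + α) = 2 ^ ((k + 2 : ℕ) + α) * (R ^ (k + 2) * R ^ α) := by
      rw [Real.mul_rpow (by norm_num) hR.le, Real.rpow_add hR _ α, Real.rpow_natCast]
    have e3 : CB * (CE * H * (2 * R) ^ ((k + 2 : ℕ) + α) + CK * R ^ 2 * (3 * S * R ^ k)) / R ^ (k + 2)
        = CB * (CE * 2 ^ ((k + 2 : ℕ) + α)) * (R ^ α * H) + CB * (CK * 3) * S := by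
      rw [e2, pow_add]
      field_simp
    rw [e3]
    have p1 : 0 ≤ CV * CE * (S + R ^ α * H) := by positivity
    have p2 : 0 ≤ CB * (CE * 2 ^ ((k + 2 : ℕ) + α)) * S := by positivity
    have p3 : 0 ≤ CB * (CK * 3) * (R ^ α * H) := by positivity
    linarith
  · intro x hx y hy
    refine (v3 x hx y hy).trans (mul_le_mul_of_nonneg_right ?_ (by positivity))
    have p1 : 0 ≤ CB * (CE * 2 ^ ((k + 2 : ℕ) + α)) * H := by positivity
    have p2 : 0 ≤ CB * (CK * 3) * H := by positivity
    linarith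

end CoreEstimate


lemma norm_ee {n : ℕ} (i : Fin n) : ‖(ee i : Eu n)‖ = 1 := by
  simp [ee]

lemma abs_apply_ee_le {n k : ℕ} (A : (Eu n) [×k]→L[ℝ] ℝ) (v : Fin k → Fin n) :
    |A (fun i => ee (v i))| ≤ ‖A‖ := by
  have := A.le_opNorm (fun i => ee (v i))
  simpa [norm_ee, Real.norm_eq_abs] using this

lemma eu_expand {n : ℕ} (x : Eu n) : x = ∑ j : Fin n, x j • (ee j : Eu n) := by
  ext i
  simp [ee, Finset.sum_apply, Pi.single_apply]

lemma norm_le_of_ee {n k : ℕ} (A : (Eu n) [×k]→L[ℝ] ℝ) (M : ℝ) (hM : 0 ≤ M)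
    (h : ∀ v : Fin k → Fin n, |A (fun i => ee (v i))| ≤ M) : ‖A‖ ≤ (n : ℝ) ^ k * M := by
  refine A.opNorm_le_bound (by positivity) (fun m => ?_)
  have e : A m = ∑ v : Fin k → Fin n, A (fun i => (m i) (v i) • (ee (v i) : Eu n)) := by
    conv_lhs => rw [show m = fun i => ∑ j : Fin n, (m i) j • (ee j : Eu n) from
      funext fun i => eu_expand (m i)]
    exact A.map_sum (fun i j => (m i) j • (ee j : Eu n))
  rw [e]
  have hb : ∀ v : Fin k → Fin n, ‖A (fun i => (m i) (v i) • (ee (v i) : Eu n))‖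
      ≤ M * ∏ i, ‖m i‖ := by
    intro v
    rw [A.map_smul_univ, norm_smul, mul_comm]
    refine mul_le_mul (h v) ?_ (norm_nonneg _) hM
    rw [norm_prod]
    exact Finset.prod_le_prod (fun i _ => norm_nonneg _)
      (fun i _ => PiLp.norm_apply_le (m i) (v i))
  refine (norm_sum_le _ _).trans ((Finset.sum_le_sum (fun v _ => hb v)).trans (le_of_eq ?_))
  simp [mul_assoc]

lemma supN_nonneg' {n : ℕ} (s : Set (Eu n)) (g : Eu n → ℝ) : 0 ≤ supN s g := by
  refine Real.sSup_nonneg ?_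
  rintro _ ⟨x, _, rfl⟩
  exact abs_nonneg _

lemma holdN_nonneg' {n : ℕ} (α : ℝ) (s : Set (Eu n)) (g : Eu n → ℝ) : 0 ≤ holdN α s g := by
  refine Real.sSup_nonneg ?_
  rintro _ ⟨x, _, y, _, _, rfl⟩
  positivity

lemma kNorm_nonneg' {n : ℕ} (R α : ℝ) (hR : 0 < R) (k : ℕ) (f : Eu n → ℝ) :
    0 ≤ kNorm n R α k f := by
  refine Real.iSup_nonneg (fun v => ?_)
  exact add_nonneg (supN_nonneg' _ _) (mul_nonneg (by positivity) (holdN_nonneg' _ _ _))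

lemma le_kNorm {n : ℕ} (R α : ℝ) (k : ℕ) (f : Eu n → ℝ) (v : Fin k → Fin n) :
    alphaNorm n R α (fun x => iteratedFDeriv ℝ k f x (fun i => ee (v i))) ≤ kNorm n R α k f :=
  le_ciSup (f := fun v : Fin k → Fin n =>
    alphaNorm n R α (fun x => iteratedFDeriv ℝ k f x (fun i => ee (v i))))
    (Set.finite_range _).bddAbove v

lemma mem_bounds {n k : ℕ} {R α : ℝ} (hR : 0 < R) (f : Eu n → ℝ) (h : memCkα n k R α f) :
    (∀ x ∈ ball (0 : Eu n) R, ‖iteratedFDeriv ℝ k f x‖ ≤ (n : ℝ) ^ k * kNorm n R α k f) ∧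
    (∀ x ∈ ball (0 : Eu n) R, ∀ y ∈ ball (0 : Eu n) R,
      ‖iteratedFDeriv ℝ k f x - iteratedFDeriv ℝ k f y‖ ≤
        ((n : ℝ) ^ k * (kNorm n R α k f / R ^ α)) * ‖x - y‖ ^ α) := by
  have hN := kNorm_nonneg' R α hR k f
  have hRα : 0 < R ^ α := Real.rpow_pos_of_pos hR _
  constructor
  · intro x hx
    refine norm_le_of_ee _ _ hN (fun v => ?_)
    have h1 : |iteratedFDeriv ℝ k f x (fun i => ee (v i))| ≤
        supN (ball (0 : Eu n) R) (fun x => iteratedFDeriv ℝ k f x (fun i => ee (v i))) :=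
      le_csSup (h.2 v).1 ⟨x, hx, rfl⟩
    refine h1.trans (le_trans ?_ (le_kNorm R α k f v))
    exact le_add_of_nonneg_right (mul_nonneg hRα.le (holdN_nonneg' _ _ _))
  · intro x hx y hy
    rcases eq_or_ne x y with rfl | hxy
    · simp only [sub_self, norm_zero]
      exact mul_nonneg (by positivity) (Real.rpow_nonneg le_rfl _)
    · rw [mul_assoc]
      refine norm_le_of_ee _ _ (by positivity) (fun v => ?_)
      have hp : 0 < ‖x - y‖ ^ α := Real.rpow_pos_of_pos (norm_pos_iff.2 (sub_ne_zero.2 hxy)) _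
      have h1 : |iteratedFDeriv ℝ k f x (fun i => ee (v i)) -
          iteratedFDeriv ℝ k f y (fun i => ee (v i))| / ‖x - y‖ ^ α ≤
          holdN α (ball (0 : Eu n) R) (fun x => iteratedFDeriv ℝ k f x (fun i => ee (v i))) :=
        le_csSup (h.2 v).2 ⟨x, hx, y, hy, hxy, rfl⟩
      have h2 : R ^ α * holdN α (ball (0 : Eu n) R)
          (fun x => iteratedFDeriv ℝ k f x (fun i => ee (v i))) ≤ kNorm n R α k f :=
        le_trans (le_add_of_nonneg_left (supN_nonneg' _ _)) (le_kNorm R α k f v)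
      rw [div_le_iff₀ hp] at h1
      rw [sub_apply]
      refine h1.trans (mul_le_mul_of_nonneg_right ?_ hp.le)
      rw [le_div_iff₀ hRα, mul_comm]
      exact h2

lemma bounds_mem {n k : ℕ} (hn : 3 ≤ n) {R α : ℝ} (hR : 0 < R) (f : Eu n → ℝ) (S H : ℝ)
    (hS : 0 ≤ S) (hH : 0 ≤ H)
    (hc : ContDiffOn ℝ k f (ball (0 : Eu n) R))
    (h1 : ∀ x ∈ ball (0 : Eu n) R, ‖iteratedFDeriv ℝ k f x‖ ≤ S)
    (h2 : ∀ x ∈ ball (0 : Eu n) R, ∀ y ∈ ball (0 : Eu n) R,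
      ‖iteratedFDeriv ℝ k f x - iteratedFDeriv ℝ k f y‖ ≤ H * ‖x - y‖ ^ α) :
    memCkα n k R α f ∧ kNorm n R α k f ≤ S + R ^ α * H := by
  have hRα : 0 < R ^ α := Real.rpow_pos_of_pos hR _
  have b1 : ∀ w : Fin k → Fin n, ∀ c ∈ ((fun x => |iteratedFDeriv ℝ k f x (fun i => ee (w i))|) ''
      ball (0 : Eu n) R), c ≤ S := by
    rintro w _ ⟨x, hx, rfl⟩
    exact (abs_apply_ee_le _ _).trans (h1 x hx)
  have b2 : ∀ w : Fin k → Fin n, ∀ c ∈ {c | ∃ x ∈ ball (0 : Eu n) R,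
      ∃ y ∈ ball (0 : Eu n) R, x ≠ y ∧
        c = |iteratedFDeriv ℝ k f x (fun i => ee (w i)) -
              iteratedFDeriv ℝ k f y (fun i => ee (w i))| / ‖x - y‖ ^ α}, c ≤ H := by
    rintro w _ ⟨x, hx, y, hy, hxy, rfl⟩
    have hp : 0 < ‖x - y‖ ^ α := Real.rpow_pos_of_pos (norm_pos_iff.2 (sub_ne_zero.2 hxy)) _
    rw [div_le_iff₀ hp, ← sub_apply]
    exact (abs_apply_ee_le _ _).trans (h2 x hx y hy)
  refine ⟨⟨hc, fun w => ⟨⟨S, fun c hc => b1 w c hc⟩, ⟨H, fun c hc => b2 w c hc⟩⟩⟩, ?_⟩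
  haveI : Nonempty (Fin n) := ⟨⟨0, by omega⟩⟩
  refine ciSup_le (fun v => ?_)
  exact add_le_add (Real.sSup_le (b1 v) hS)
    (mul_le_mul_of_nonneg_left (Real.sSup_le (b2 v) hH) hRα.le)

lemma newt_core (n k : ℕ) (hn : 3 ≤ n) (α : ℝ) (hα0 : 0 < α) (hα1 : α < 1) :
    ∃ C > 0, ∀ R : ℝ, 0 < R → ∀ f : Eu n → ℝ, memCkα n k R α f →
      memCkα n (k + 2) R α (newt n R f) ∧
      kNorm n R α (k + 2) (newt n R f) ≤ C * kNorm n R α k f := by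
  obtain ⟨C, hC, hcore⟩ := core_abs n k hn α hα0 hα1
  set c : ℝ := 1 / (n * (2 - (n : ℝ)) * sphArea n) with hcdef
  refine ⟨|c| * C * 3 * (n : ℝ) ^ k + 1, by positivity, fun R hR f hf => ?_⟩
  have hRα : 0 < R ^ α := Real.rpow_pos_of_pos hR _
  set N := kNorm n R α k f with hNdef
  have hN : 0 ≤ N := kNorm_nonneg' R α hR k f
  obtain ⟨m1, m2⟩ := mem_bounds hR f hf
  set u : Eu n → ℝ := fun x => ∫ y in ball (0 : Eu n) R, KK n (x - y) * f y with hu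
  obtain ⟨r1, r2, r3⟩ := hcore R hR f ((n : ℝ) ^ k * N) ((n : ℝ) ^ k * (N / R ^ α))
    (by positivity) (by positivity) hf.1 m1 m2 u hu
  have hne : newt n R f = c • u := by
    funext x
    simp only [newt, fundSol, Pi.smul_apply, smul_eq_mul, hu, ← integral_const_mul, KK,
      hcdef, mul_assoc]
  have hd : ∀ x ∈ ball (0 : Eu n) R, iteratedFDeriv ℝ (k + 2) (newt n R f) x =
      c • iteratedFDeriv ℝ (k + 2) u x := by
    intro x hx
    rw [hne]
    exact iteratedFDeriv_const_smul_apply (r1.contDiffAt (isOpen_ball.mem_nhds hx))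
  have hRR : R ^ α * ((n : ℝ) ^ k * (N / R ^ α)) = (n : ℝ) ^ k * N := by
    field_simp
  rw [hRR] at r2
  obtain ⟨q1, q2⟩ := bounds_mem (k := k + 2) (α := α) hn hR (newt n R f)
    (|c| * (C * ((n : ℝ) ^ k * N + (n : ℝ) ^ k * N)))
    (|c| * (C * ((n : ℝ) ^ k * (N / R ^ α)))) (by positivity) (by positivity)
    (by rw [hne]; exact r1.const_smul c)
    (fun x hx => by
      rw [hd x hx, norm_smul, Real.norm_eq_abs]
      exact mul_le_mul_of_nonneg_left (r2 x hx) (abs_nonneg _))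
    (fun x hx y hy => by
      rw [hd x hx, hd y hy, ← smul_sub, norm_smul, Real.norm_eq_abs, mul_assoc]
      exact mul_le_mul_of_nonneg_left (r3 x hx y hy) (abs_nonneg _))
  refine ⟨q1, q2.trans ?_⟩
  have : R ^ α * (|c| * (C * ((n : ℝ) ^ k * (N / R ^ α)))) = |c| * C * ((n : ℝ) ^ k * N) := by
    rw [← hRR]; ring
  rw [this]
  nlinarith

theorem stmt_16 (n k : ℕ) (hn : 3 ≤ n) (α : ℝ) (hα0 : 0 < α) (hα1 : α < 1) :
    (∃ C > 0, ∀ R : ℝ, 0 < R → ∀ f : EuclideanSpace ℝ (Fin n) → ℝ,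
      memCkα n k R α f →
        ContDiffOn ℝ (k + 2) (newt n R f) (ball (0 : EuclideanSpace ℝ (Fin n)) R) ∧
        kNorm n R α (k + 2) (newt n R f) ≤ C * kNorm n R α k f) ∧
    ∀ m : ℕ, 1 ≤ m → ∃ C > 0, ∀ R : ℝ, 0 < R → ∀ f : EuclideanSpace ℝ (Fin n) → ℝ,
      memCkα n k R α f →
        kNorm n R α (k + 2 * m) ((newt n R)^[m] f) ≤ C * kNorm n R α k f := by
  constructor
  · obtain ⟨C, hC, h⟩ := newt_core n k hn α hα0 hα1
    refine ⟨C, hC, fun R hR f hf => ⟨?_, (h R hR f hf).2⟩⟩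
    have := (h R hR f hf).1.1
    exact_mod_cast this
  · intro m _
    have key : ∃ C > 0, ∀ R : ℝ, 0 < R → ∀ f : EuclideanSpace ℝ (Fin n) → ℝ,
        memCkα n k R α f → memCkα n (k + 2 * m) R α ((newt n R)^[m] f) ∧
          kNorm n R α (k + 2 * m) ((newt n R)^[m] f) ≤ C * kNorm n R α k f := by
      induction m with
      | zero => exact ⟨1, one_pos, fun R hR f hf => ⟨hf, by simp⟩⟩
      | succ m ih =>
        rename_i hm
        obtain ⟨C, hC, h⟩ : ∃ C > 0, ∀ R : ℝ, 0 < R → ∀ f : EuclideanSpace ℝ (Fin n) → ℝ,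
            memCkα n k R α f → memCkα n (k + 2 * m) R α ((newt n R)^[m] f) ∧
              kNorm n R α (k + 2 * m) ((newt n R)^[m] f) ≤ C * kNorm n R α k f := by
          rcases Nat.eq_zero_or_pos m with rfl | hp
          · exact ⟨1, one_pos, fun R hR f hf => ⟨hf, by simp⟩⟩
          · exact ih hp
        obtain ⟨C', hC', h'⟩ := newt_core n (k + 2 * m) hn α hα0 hα1
        refine ⟨C' * C, mul_pos hC' hC, fun R hR f hf => ?_⟩
        obtain ⟨a1, a2⟩ := h R hR f hf
        obtain ⟨b1, b2⟩ := h' R hR _ a1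
        rw [Function.iterate_succ_apply']
        refine ⟨b1, b2.trans ?_⟩
        rw [mul_assoc]
        exact mul_le_mul_of_nonneg_left a2 hC'.le
    obtain ⟨C, hC, h⟩ := key
    exact ⟨C, hC, fun R hR f hf => (h R hR f hf).2⟩
end
end

section
/- Let n ≥ 3 and let β, μ be multi-indices with |β| = |μ| + 1. Then the function x ↦ ∫_{∂B_R} D^β_x Γ(x−y) (y−x)^μ ν_j dσ(y) is constant on B_R, where ν_j is the j-th component of the outward unit normal of the sphere ∂B_R. -/
open MeasureTheory Metric

noncomputable section

section finiteness
open Module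

variable {E : Type*} [NormedAddCommGroup E] [InnerProductSpace ℝ E] [MeasurableSpace E]
  [BorelSpace E] [FiniteDimensional ℝ E]

lemma hemisphere_finite {n : ℕ} (hn : finrank ℝ E = n + 1) (v : E) (hv : ‖v‖ = 1) :
    μH[(n : ℝ)] {u : E | ‖u‖ = 1 ∧ inner ℝ v u ≤ 0} < ⊤ := by
  have hv0 : v ≠ 0 := by rintro rfl; simp at hv
  have : Fact (finrank ℝ E = n + 1) := ⟨hn⟩
  have hd : finrank ℝ (ℝ ∙ v)ᗮ = n := Submodule.finrank_orthogonal_span_singleton hv0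
  let f : (ℝ ∙ v)ᗮ → E := fun w => stereoInvFunAux v (w : E)
  have hf : ContDiff ℝ 1 f := contDiff_stereoInvFunAux.comp (ℝ ∙ v)ᗮ.subtypeL.contDiff
  have hK : IsCompact (closedBall (0 : (ℝ ∙ v)ᗮ) 2) := isCompact_closedBall _ _
  obtain ⟨K, hL⟩ := LocallyLipschitzOn.exists_lipschitzOnWith_of_compact hK
    (hf.locallyLipschitz.locallyLipschitzOn (s := closedBall 0 2))
  have h1 := hL.hausdorffMeasure_image_le (d := (n : ℝ)) (by positivity)
  have h2 : μH[(n : ℝ)] (closedBall (0 : (ℝ ∙ v)ᗮ) 2) < ⊤ := by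
    have : (μH[((finrank ℝ (ℝ ∙ v)ᗮ : ℕ) : ℝ)] : Measure (ℝ ∙ v)ᗮ).IsAddHaarMeasure := inferInstance
    rw [hd] at this
    exact hK.measure_lt_top
  refine lt_of_le_of_lt (measure_mono ?_) (lt_of_le_of_lt h1
    (ENNReal.mul_lt_top (by simp) h2))
  rintro u ⟨hu, hvu⟩
  have huv : u ≠ v := by
    rintro rfl
    rw [real_inner_self_eq_norm_sq, hv] at hvu
    norm_num at hvu
  have := stereo_left_inv hv (x := ⟨u, by simp [hu]⟩) huv
  refine ⟨stereoToFun v u, ?_, ?_⟩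
  · rw [mem_closedBall_zero_iff, stereoToFun_apply, norm_smul]
    have h3 : ‖(ℝ ∙ v)ᗮ.orthogonalProjectionOnto u‖ ≤ 1 := by
      simpa [hu] using (ℝ ∙ v)ᗮ.norm_orthogonalProjectionOnto_apply_le u
    have h4 : ‖(2 / ((1 : ℝ) - innerSL ℝ v u))‖ ≤ 2 := by
      simp only [innerSL_apply_apply]
      rw [Real.norm_of_nonneg (by apply div_nonneg <;> linarith)]
      rw [div_le_iff₀ (by linarith)]
      linarith
    calc _ ≤ 2 * (1 : ℝ) := by gcongr
      _ = 2 := by norm_num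
  · exact congrArg Subtype.val this

lemma sphere_finite {n : ℕ} (hn : finrank ℝ E = n + 1) (R : ℝ) :
    μH[(n : ℝ)] (sphere (0 : E) R) < ⊤ := by
  have : Nontrivial E := Module.nontrivial_of_finrank_pos (R := ℝ) (by omega)
  obtain ⟨v, hv⟩ := exists_norm_eq E (zero_le_one (α := ℝ))
  have h1 : μH[(n : ℝ)] (sphere (0 : E) 1) < ⊤ := by
    refine lt_of_le_of_lt (measure_mono ?_) (measure_union_lt_top (hemisphere_finite hn v hv)
      (hemisphere_finite hn (-v) (by simpa using hv)))
    intro u hu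
    have : ‖u‖ = 1 := by simpa using hu
    rcases le_total (inner ℝ v u) 0 with h | h
    · left; exact ⟨this, h⟩
    · right; exact ⟨this, by simpa [inner_neg_left] using h⟩
  rcases lt_or_ge R 0 with hR | hR
  · simp [sphere_eq_empty_of_neg hR]
  have hl : LipschitzWith ‖R‖₊ (fun y : E => R • y) := lipschitzWith_smul R
  refine lt_of_le_of_lt (measure_mono ?_) (lt_of_le_of_lt
    (hl.hausdorffMeasure_image_le (d := (n : ℝ)) (by positivity) (sphere (0 : E) 1))
    (ENNReal.mul_lt_top (by simp) h1))
  intro y hy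
  have hy' : ‖y‖ = R := by simpa using hy
  rcases hR.eq_or_lt with h | h
  · refine ⟨v, by simpa using hv, ?_⟩
    subst h
    simp at hy'
    simp [hy']
  · refine ⟨R⁻¹ • y, ?_, ?_⟩
    · simp [norm_smul, hy', abs_of_pos h, h.ne']
    · simp [smul_smul, h.ne']

end finiteness

section uniqueness
open Complex

variable {E : Type*} [NormedAddCommGroup E] [InnerProductSpace ℝ E] [MeasurableSpace E]
  [BorelSpace E] [FiniteDimensional ℝ E]

def RotInv (σ : Measure E) : Prop := ∀ L : E ≃ₗᵢ[ℝ] E, σ.map L = σ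

lemma charFun_inv {σ : Measure E} (h : RotInv σ) {a b : E} (hab : ‖a‖ = ‖b‖) :
    charFun σ a = charFun σ b := by
  let L : E ≃ₗᵢ[ℝ] E := (ℝ ∙ (a - b))ᗮ.reflection
  have hL : L a = b := Submodule.reflection_sub hab
  rw [← hL, charFun_apply, charFun_apply]
  conv_rhs => rw [← h L]
  rw [integral_map (L.continuous.measurable.aemeasurable) (by
    apply Continuous.aestronglyMeasurable; fun_prop)]
  simp

lemma rotInv_unique {σ τ : Measure E} [IsFiniteMeasure σ] [IsFiniteMeasure τ]
    (hσ : RotInv σ) (hτ : RotInv τ) (sσ : ∀ᵐ x ∂σ, ‖x‖ = 1) (sτ : ∀ᵐ x ∂τ, ‖x‖ = 1) :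
    τ Set.univ • σ = σ Set.univ • τ := by
  have : IsFiniteMeasure (τ Set.univ • σ) := ⟨by
    simpa using ENNReal.mul_lt_top (measure_lt_top τ _) (measure_lt_top σ _)⟩
  have : IsFiniteMeasure (σ Set.univ • τ) := ⟨by
    simpa using ENNReal.mul_lt_top (measure_lt_top σ _) (measure_lt_top τ _)⟩
  apply Measure.ext_of_charFun
  funext t
  have key : ∫ y, charFun σ (‖t‖ • y) ∂τ = ∫ x, charFun τ (‖t‖ • x) ∂σ := by
    simp only [charFun_apply]
    rw [integral_integral_swap]
    · simp only [inner_smul_right, real_inner_comm]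
    · have : Continuous (Function.uncurry fun (y x : E) =>
        cexp (((inner ℝ x (‖t‖ • y) : ℝ) : ℂ) * I)) := by
        unfold Function.uncurry; fun_prop
      refine Integrable.of_bound (C := 1) this.aestronglyMeasurable (.of_forall fun p => ?_)
      simp only [Function.uncurry]
      rw [Complex.norm_exp_ofReal_mul_I]
  have h1 : ∫ y, charFun σ (‖t‖ • y) ∂τ = (τ.real Set.univ : ℂ) * charFun σ t := by
    rw [integral_congr_ae (g := fun _ => charFun σ t)]
    · simp
    · filter_upwards [sτ] with y hy
      exact charFun_inv hσ (by simp [norm_smul, hy])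
  have h2 : ∫ y, charFun τ (‖t‖ • y) ∂σ = (σ.real Set.univ : ℂ) * charFun τ t := by
    rw [integral_congr_ae (g := fun _ => charFun τ t)]
    · simp
    · filter_upwards [sσ] with y hy
      exact charFun_inv hτ (by simp [norm_smul, hy])
  rw [charFun_apply, charFun_apply, integral_smul_measure, integral_smul_measure,
    ← charFun_apply, ← charFun_apply]
  rw [h1, h2] at key
  simpa [Measure.real] using key

end uniqueness

section polar
open Module Measure

variable {E : Type*} [NormedAddCommGroup E] [InnerProductSpace ℝ E] [MeasurableSpace E]
  [BorelSpace E] [FiniteDimensional ℝ E] [Nontrivial E]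

lemma lintegral_polar (f : E → ENNReal) (hf : Measurable f) :
    ∫⁻ z, f z = ∫⁻ u : sphere (0 : E) 1, ∫⁻ r : Set.Ioi (0 : ℝ), f (r.1 • u.1)
      ∂(volumeIoiPow (finrank ℝ E - 1)) ∂(volume : Measure E).toSphere := by
  have h0 : ∫⁻ z, f z = ∫⁻ z : ({0}ᶜ : Set E), f z ∂(volume.comap Subtype.val) := by
    rw [lintegral_subtype_comap (measurableSet_singleton _).compl]
    rw [restrict_compl_singleton]
  rw [h0]
  have hp := (volume : Measure E).measurePreserving_homeomorphUnitSphereProd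
  have hm : Measurable fun p : sphere (0 : E) 1 × Set.Ioi (0 : ℝ) => f (p.2.1 • p.1.1) :=
    hf.comp (by fun_prop)
  have := hp.lintegral_comp hm
  rw [lintegral_prod _ hm.aemeasurable] at this
  rw [← this]
  refine lintegral_congr fun z => ?_
  have hz : (z : E) ≠ 0 := z.2
  simp [smul_smul, hz]

lemma lintegral_cone (g : E → ENNReal) (a : E → ℝ) (hg : Measurable g) (ha : Measurable a)
    (hg0 : ∀ r : ℝ, 0 < r → ∀ u : E, ‖u‖ = 1 → g (r • u) = g u)
    (ha0 : ∀ r : ℝ, 0 < r → ∀ u : E, ‖u‖ = 1 → a (r • u) = r * a u)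
    (hap : ∀ u : E, ‖u‖ = 1 → 0 < a u) :
    ∫⁻ z in {z | a z < 1}, g z = ∫⁻ u : sphere (0 : E) 1,
      g u * ENNReal.ofReal (((a u)⁻¹) ^ (finrank ℝ E) / finrank ℝ E)
        ∂(volume : Measure E).toSphere := by
  have hms : MeasurableSet {z | a z < 1} := measurableSet_lt ha measurable_const
  rw [← lintegral_indicator hms, lintegral_polar _ (hg.indicator hms)]
  refine lintegral_congr fun u => ?_
  have hu : ‖(u : E)‖ = 1 := by simpa using u.2
  have hau := hap u hu
  let b : Set.Ioi (0 : ℝ) := ⟨(a u)⁻¹, by simpa using hau⟩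
  have hdim : 0 < finrank ℝ E := finrank_pos
  have hb := volumeIoiPow_apply_Iio (finrank ℝ E - 1) b
  have e1 : (((finrank ℝ E - 1 : ℕ) : ℝ) + 1) = finrank ℝ E := by
    rw [Nat.cast_pred hdim]; ring
  rw [Nat.sub_add_cancel hdim, e1] at hb
  rw [← hb, ← lintegral_indicator_const measurableSet_Iio]
  refine lintegral_congr fun r => ?_
  have hr : 0 < r.1 := r.2
  have : (r.1 • u.1 ∈ {z | a z < 1}) ↔ r ∈ Set.Iio b := by
    rw [Set.mem_ofPred_eq, ha0 _ hr _ hu, Set.mem_Iio, ← Subtype.coe_lt_coe]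
    simp only [b]
    rw [← one_div, lt_div_iff₀ hau]
  by_cases h : r ∈ Set.Iio b
  · rw [Set.indicator_of_mem h, Set.indicator_of_mem (this.2 h), hg0 _ hr _ hu]
  · rw [Set.indicator_of_notMem h, Set.indicator_of_notMem (fun h' => h (this.1 h'))]

end polar

section change
open Module Measure

variable {E : Type*} [NormedAddCommGroup E] [InnerProductSpace ℝ E] [MeasurableSpace E]
  [BorelSpace E] [FiniteDimensional ℝ E]

/-- Normalised surface measure of the unit sphere, as a measure on the ambient space. -/
def sphMeas (E : Type*) [NormedAddCommGroup E] [InnerProductSpace ℝ E] [MeasurableSpace E]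
  [BorelSpace E] [FiniteDimensional ℝ E] : Measure E :=
  ((volume : Measure E).toSphere).map Subtype.val

instance : IsFiniteMeasure (sphMeas E) := by unfold sphMeas; infer_instance

lemma lintegral_sphMeas (f : E → ENNReal) :
    ∫⁻ u, f u ∂(sphMeas E) = ∫⁻ u : sphere (0 : E) 1, f u ∂(volume : Measure E).toSphere :=
  (MeasurableEmbedding.subtype_coe isClosed_sphere.measurableSet).lintegral_map _

lemma sphMeas_ae : ∀ᵐ u ∂(sphMeas E), ‖u‖ = 1 := by
  unfold sphMeas
  rw [(MeasurableEmbedding.subtype_coe isClosed_sphere.measurableSet).ae_map_iff]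
  exact .of_forall fun u => by simp

/-- radial projection -/
def rproj (z : E) : E := ‖z‖⁻¹ • z

lemma measurable_rproj : Measurable (rproj : E → E) := by unfold rproj; fun_prop

lemma rproj_smul {r : ℝ} (hr : 0 < r) (z : E) : rproj (r • z) = rproj z := by
  unfold rproj
  rw [norm_smul, Real.norm_of_nonneg hr.le, smul_smul, mul_inv]
  congr 1
  field_simp

lemma rproj_unit {z : E} (hz : ‖z‖ = 1) : rproj z = z := by simp [rproj, hz]

lemma lintegral_ball_rproj [Nontrivial E] (φ : E → ENNReal) (hφ : Measurable φ) :
    ∫⁻ z in {z : E | ‖z‖ < 1}, φ (rproj z) = (∫⁻ u, φ u ∂(sphMeas E)) *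
      ENNReal.ofReal (1 / finrank ℝ E) := by
  rw [lintegral_cone (fun z => φ (rproj z)) (fun z => ‖z‖) (hφ.comp measurable_rproj)
    measurable_norm, lintegral_sphMeas, ← lintegral_mul_const]
  · refine lintegral_congr fun u => ?_
    have hu : ‖(u : E)‖ = 1 := by simp
    rw [rproj_unit hu, hu]
    simp
  · exact hφ.comp measurable_subtype_coe
  · intro r hr u hu
    rw [rproj_smul hr]
  · intro r hr u hu
    rw [norm_smul, Real.norm_of_nonneg hr.le]
  · intro u hu
    rw [hu]; exact one_pos

lemma cancel_dim [Nontrivial E] {a b : ENNReal} (h : a * ENNReal.ofReal (1 / finrank ℝ E) =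
    b * ENNReal.ofReal (1 / finrank ℝ E)) : a = b := by
  have : 0 < finrank ℝ E := finrank_pos
  refine (ENNReal.mul_left_inj ?_ ENNReal.ofReal_ne_top).1 h
  simp only [ne_eq, ENNReal.ofReal_eq_zero, not_le]
  positivity

lemma sphMeas_rotInv [Nontrivial E] : RotInv (sphMeas E) := by
  intro L
  ext s hs
  rw [← lintegral_indicator_one hs, ← lintegral_indicator_one hs,
    lintegral_map (measurable_one.indicator hs) L.continuous.measurable]
  apply cancel_dim (E := E)
  rw [← lintegral_ball_rproj _ (measurable_one.indicator hs),
    ← lintegral_ball_rproj (fun a => s.indicator 1 (L a))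
      ((measurable_one.indicator hs).comp L.continuous.measurable)]
  have hm : MeasurableSet {z : E | ‖z‖ < 1} := measurableSet_lt measurable_norm measurable_const
  have h := L.measurePreserving.setLIntegral_comp_preimage hm
    (f := fun z => s.indicator 1 (rproj z)) ((measurable_one.indicator hs).comp measurable_rproj)
  rw [← h]
  have e : (L ⁻¹' {z : E | ‖z‖ < 1}) = {z : E | ‖z‖ < 1} := by ext z; simp
  rw [e]
  refine lintegral_congr fun z => ?_
  simp [rproj]

lemma inner_lt_one {x u : E} (hx : ‖x‖ < 1) (hu : ‖u‖ = 1) : inner ℝ x u < 1 := by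
  have := real_inner_le_norm x u
  rw [hu] at this; linarith

lemma sub_pos_norm {x u : E} (hx : ‖x‖ < 1) (hu : ‖u‖ = 1) : 0 < ‖u - x‖ := by
  rw [norm_pos_iff, sub_ne_zero]
  rintro rfl
  linarith

/-- the homogeneous change of variables -/
def Gmap (x y : E) : E := y - ‖y‖ • x

def Gder (x y : E) : E →L[ℝ] E :=
  ContinuousLinearMap.id ℝ E - (‖y‖⁻¹ • innerSL ℝ y).smulRight x

lemma Gmap_deriv (x : E) {y : E} (hy : y ≠ 0) : HasFDerivAt (Gmap x) (Gder x y) y := by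
  have h1 : HasFDerivAt (fun y : E => ‖y‖) (‖y‖⁻¹ • innerSL ℝ y) y := by
    have h := (hasStrictFDerivAt_norm_sq y).hasFDerivAt.sqrt (by simpa using hy)
    convert h using 1
    · funext z; simp
    · ext z
      simp
      field_simp
  exact (hasFDerivAt_id y).sub (h1.smul_const x)

lemma Gder_det (x y : E) : (Gder x y).det = 1 - inner ℝ x (rproj y) := by
  have : ((Gder x y : E →L[ℝ] E) : E →ₗ[ℝ] E) = LinearMap.transvection
      ((‖y‖⁻¹ • innerSL ℝ y : E →L[ℝ] ℝ) : E →ₗ[ℝ] ℝ) (-x) := by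
    ext z
    simp [Gder, LinearMap.transvection.apply, sub_eq_add_neg]
  rw [ContinuousLinearMap.det, this, LinearMap.transvection.det]
  simp [rproj, inner_smul_right, real_inner_comm, sub_eq_add_neg]

lemma Gmap_inj {x : E} (hx : ‖x‖ < 1) : Function.Injective (Gmap x) := by
  intro y y' h
  unfold Gmap at h
  have h1 : y - y' = (‖y‖ - ‖y'‖) • x := by
    rw [sub_smul]
    rw [sub_eq_sub_iff_add_eq_add] at h ⊢
    rw [h]; abel
  have h2 : ‖y - y'‖ = |‖y‖ - ‖y'‖| * ‖x‖ := by
    conv_lhs => rw [h1, norm_smul, Real.norm_eq_abs]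
  have h3 := abs_norm_sub_norm_le y y'
  by_contra hne
  have h4 : 0 < ‖y - y'‖ := norm_pos_iff.2 (sub_ne_zero.2 hne)
  have h5 : |‖y‖ - ‖y'‖| * ‖x‖ ≤ ‖y - y'‖ * ‖x‖ := by gcongr
  nlinarith

lemma Gmap_surj {x : E} (hx : ‖x‖ < 1) : Function.Surjective (Gmap x) := by
  intro z
  let f : ℝ → ℝ := fun t => t - ‖z + t • x‖
  have hf : Continuous f := by fun_prop
  have hT : 0 ≤ ‖z‖ / (1 - ‖x‖) := div_nonneg (norm_nonneg _) (by linarith)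
  have h0 : f 0 ≤ 0 := by simp [f]
  have h1 : 0 ≤ f (‖z‖ / (1 - ‖x‖)) := by
    simp only [f]
    have := norm_add_le z ((‖z‖ / (1 - ‖x‖)) • x)
    rw [norm_smul, Real.norm_of_nonneg hT] at this
    have e : ‖z‖ / (1 - ‖x‖) - (‖z‖ / (1 - ‖x‖)) * ‖x‖ = ‖z‖ := by
      field_simp [show (1 - ‖x‖) ≠ 0 by linarith]
    linarith
  obtain ⟨t, ht, hft⟩ := intermediate_value_Icc hT hf.continuousOn ⟨h0, h1⟩
  refine ⟨z + t • x, ?_⟩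
  have : ‖z + t • x‖ = t := by simp only [f] at hft; linarith
  simp [Gmap, this]

lemma Gmap_image {x : E} (hx : ‖x‖ < 1) : Gmap x '' {0}ᶜ = {0}ᶜ := by
  rw [Set.image_compl_eq ⟨Gmap_inj hx, Gmap_surj hx⟩]
  simp [Gmap]

lemma Gmap_smul (x u : E) {r : ℝ} (hr : 0 < r) : Gmap x (r • u) = r • Gmap x u := by
  simp [Gmap, norm_smul, abs_of_pos hr, smul_sub, smul_smul]

lemma Gmap_unit (x : E) {u : E} (hu : ‖u‖ = 1) : Gmap x u = u - x := by simp [Gmap, hu]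

lemma sphere_change [Nontrivial E] {x : E} (hx : ‖x‖ < 1) (φ : E → ENNReal) (hφ : Measurable φ) :
    ∫⁻ u, ENNReal.ofReal ((1 - inner ℝ x u) * (‖u - x‖⁻¹) ^ finrank ℝ E) * φ (rproj (u - x))
      ∂(sphMeas E) = ∫⁻ u, φ u ∂(sphMeas E) := by
  have hdim : 0 < finrank ℝ E := finrank_pos
  apply cancel_dim (E := E)
  rw [← lintegral_ball_rproj _ hφ]
  have hm : MeasurableSet {z : E | ‖z‖ < 1} := measurableSet_lt measurable_norm measurable_const
  have hG : Measurable (Gmap x) := by unfold Gmap; fun_prop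
  have hm' : MeasurableSet {z : E | ‖Gmap x z‖ < 1} :=
    measurableSet_lt hG.norm measurable_const
  have step := lintegral_image_eq_lintegral_abs_det_fderiv_mul (volume : Measure E)
    (measurableSet_singleton (0 : E)).compl
    (fun y hy => (Gmap_deriv x (y := y) hy).hasFDerivWithinAt) (Gmap_inj hx).injOn
    ({z : E | ‖z‖ < 1}.indicator fun z => φ (rproj z))
  rw [Gmap_image hx, restrict_compl_singleton, lintegral_indicator hm] at step
  rw [step]
  have e : ∀ y : E, ENNReal.ofReal |(Gder x y).det| *
      ({z : E | ‖z‖ < 1}.indicator (fun z => φ (rproj z)) (Gmap x y)) =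
      {z : E | ‖Gmap x z‖ < 1}.indicator
        (fun y => ENNReal.ofReal |1 - inner ℝ x (rproj y)| * φ (rproj (Gmap x y))) y := by
    intro y
    rw [Gder_det]
    by_cases h : ‖Gmap x y‖ < 1
    · rw [Set.indicator_of_mem (by exact h), Set.indicator_of_mem (by exact h)]
    · rw [Set.indicator_of_notMem (by exact h), Set.indicator_of_notMem (by exact h), mul_zero]
  simp_rw [e]
  rw [lintegral_indicator hm', lintegral_cone (fun y => ENNReal.ofReal |1 - inner ℝ x (rproj y)| *
    φ (rproj (Gmap x y))) (fun y => ‖Gmap x y‖), lintegral_sphMeas, ← lintegral_mul_const]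
  · refine lintegral_congr fun u => ?_
    have hu : ‖(u : E)‖ = 1 := by simp
    have h1 := inner_lt_one hx hu
    rw [rproj_unit hu, Gmap_unit x hu, abs_of_pos (by linarith), mul_right_comm,
      mul_right_comm (ENNReal.ofReal (1 - inner ℝ x (u : E)))]
    congr 1
    have h2 : 0 ≤ 1 - inner ℝ x (u : E) := by linarith
    rw [← ENNReal.ofReal_mul h2, ← ENNReal.ofReal_mul (mul_nonneg h2 (by positivity))]
    congr 1
    ring
  · have := measurable_rproj (E := E)
    fun_prop
  · have := measurable_rproj (E := E)
    fun_prop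
  · exact hG.norm
  · intro r hr u hu
    rw [Gmap_smul _ _ hr, rproj_smul hr, rproj_smul hr]
  · intro r hr u hu
    rw [Gmap_smul _ _ hr, norm_smul, Real.norm_of_nonneg hr.le]
  · intro u hu
    rw [Gmap_unit x hu]; exact sub_pos_norm hx hu

end change

section mainlemma
open Module Measure

variable {E : Type*} [NormedAddCommGroup E] [InnerProductSpace ℝ E] [MeasurableSpace E]
  [BorelSpace E] [FiniteDimensional ℝ E]

lemma sphere_change_integral [Nontrivial E] {x : E} (hx : ‖x‖ < 1) (F : E → ℝ)
    (hF : Measurable F) :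
    ∫ u, ((1 - inner ℝ x u) * (‖u - x‖⁻¹) ^ finrank ℝ E) * F (rproj (u - x)) ∂(sphMeas E) =
      ∫ u, F u ∂(sphMeas E) := by
  have hθ : Measurable fun u : E => rproj (u - x) := measurable_rproj.comp (by fun_prop)
  have hw : Measurable fun u : E =>
      ENNReal.ofReal ((1 - inner ℝ x u) * (‖u - x‖⁻¹) ^ finrank ℝ E) := by fun_prop
  have hmap : ((sphMeas E).withDensity fun u =>
      ENNReal.ofReal ((1 - inner ℝ x u) * (‖u - x‖⁻¹) ^ finrank ℝ E)).map
      (fun u => rproj (u - x)) = sphMeas E := by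
    ext s hs
    rw [← lintegral_indicator_one hs, ← lintegral_indicator_one hs,
      lintegral_map (measurable_one.indicator hs) hθ,
      lintegral_withDensity_eq_lintegral_mul _ hw
        (g := fun u => s.indicator 1 (rproj (u - x))) ((measurable_one.indicator hs).comp hθ),
      ← sphere_change hx _ (measurable_one.indicator hs)]
    rfl
  conv_rhs => rw [← hmap]
  rw [integral_map hθ.aemeasurable hF.aestronglyMeasurable,
    integral_withDensity_eq_integral_toReal_smul hw (.of_forall fun _ => ENNReal.ofReal_lt_top)]
  refine integral_congr_ae ?_
  filter_upwards [sphMeas_ae] with u hu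
  have h1 := inner_lt_one hx hu
  rw [ENNReal.toReal_ofReal (mul_nonneg (by linarith) (by positivity)), smul_eq_mul]

lemma integrable_sph {f : E → ℝ} (hf : Measurable f) (hc : ContinuousOn f (sphere 0 1)) :
    Integrable f (sphMeas E) := by
  obtain ⟨C, hC⟩ := (isCompact_sphere (0 : E) 1).exists_bound_of_continuousOn hc
  refine Integrable.of_bound hf.aestronglyMeasurable C ?_
  filter_upwards [sphMeas_ae] with u hu
  exact hC u (by simpa using hu)

lemma odd_integral_zero [Nontrivial E] {f : E → ℝ} (hf : Measurable f)
    (ho : ∀ u, f (-u) = - f u) : ∫ u, f u ∂(sphMeas E) = 0 := by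
  have h := sphMeas_rotInv (E := E) (LinearIsometryEquiv.neg ℝ)
  have h2 : ∫ u, f u ∂(sphMeas E) = - ∫ u, f u ∂(sphMeas E) := by
    conv_lhs => rw [← h]
    rw [integral_map (LinearIsometryEquiv.continuous _).measurable.aemeasurable
      hf.aestronglyMeasurable]
    simp [ho, integral_neg]
  linarith

def Sfun (x z : E) : ℝ := Real.sqrt ((inner ℝ x z) ^ 2 + (1 - ‖x‖ ^ 2) * ‖z‖ ^ 2)

def qfun (x e z : E) : ℝ :=
  (‖z‖ ^ 2 * inner ℝ e x - inner ℝ x z * inner ℝ e z) / (‖z‖ * Sfun x z)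

def pfun (x e z : E) : ℝ := qfun x e z + inner ℝ e z / ‖z‖

lemma Sfun_sub {x u : E} (hx : ‖x‖ < 1) (hu : ‖u‖ = 1) : Sfun x (u - x) = 1 - inner ℝ x u := by
  have h1 := inner_lt_one hx hu
  unfold Sfun
  rw [Real.sqrt_eq_iff_mul_self_eq (by have : 0 ≤ 1 - ‖x‖ ^ 2 := by nlinarith [norm_nonneg x]
                                       positivity) (by linarith)]
  rw [inner_sub_right, norm_sub_sq_real, hu, real_inner_self_eq_norm_sq, real_inner_comm x u]
  ring

lemma pfun_sub {x u : E} (e : E) (hx : ‖x‖ < 1) (hu : ‖u‖ = 1) :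
    pfun x e (u - x) * (1 - inner ℝ x u) = inner ℝ e u * ‖u - x‖ := by
  have h1 : (1 - inner ℝ x u) ≠ 0 := by have := inner_lt_one hx hu; linarith
  have h2 := (sub_pos_norm hx hu).ne'
  have h3 : ‖u - x‖ ^ 2 = 1 - 2 * inner ℝ x u + ‖x‖ ^ 2 := by
    rw [norm_sub_sq_real, hu, real_inner_comm x u]; ring
  unfold pfun qfun
  rw [Sfun_sub hx hu]
  simp only [inner_sub_right, real_inner_self_eq_norm_sq]
  generalize ‖u - x‖ = D at *
  generalize inner ℝ x u = a at *
  generalize inner ℝ e u = b at *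
  generalize inner ℝ e x = c at *
  field_simp
  linear_combination (c - b) * h3

lemma pfun_smul {r : ℝ} (hr : 0 < r) (x e z : E) : pfun x e (r • z) = pfun x e z := by
  have hS : Sfun x (r • z) = r * Sfun x z := by
    unfold Sfun
    rw [norm_smul, inner_smul_right, Real.norm_of_nonneg hr.le]
    rw [show (r * inner ℝ x z) ^ 2 + (1 - ‖x‖ ^ 2) * (r * ‖z‖) ^ 2 =
      r ^ 2 * ((inner ℝ x z) ^ 2 + (1 - ‖x‖ ^ 2) * ‖z‖ ^ 2) by ring,
      Real.sqrt_mul (by positivity), Real.sqrt_sq hr.le]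
  unfold pfun qfun
  rw [hS, norm_smul, inner_smul_right, inner_smul_right, Real.norm_of_nonneg hr.le]
  congr 1
  · rw [show (r * ‖z‖) ^ 2 * inner ℝ e x - r * inner ℝ x z * (r * inner ℝ e z) =
      r ^ 2 * (‖z‖ ^ 2 * inner ℝ e x - inner ℝ x z * inner ℝ e z) by ring,
      show r * ‖z‖ * (r * Sfun x z) = r ^ 2 * (‖z‖ * Sfun x z) by ring]
    exact mul_div_mul_left _ _ (by positivity)
  · exact mul_div_mul_left _ _ hr.ne'

lemma qfun_neg (x e z : E) : qfun x e (-z) = qfun x e z := by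
  simp [qfun, Sfun]

lemma kernel_const [Nontrivial E] (K : E → ℝ) (hKc : ContinuousOn K {0}ᶜ)
    (hKo : ∀ z, K (-z) = - K z)
    (hKh : ∀ r : ℝ, 0 < r → ∀ z, z ≠ 0 → K (r • z) = (r⁻¹) ^ (finrank ℝ E - 1) * K z)
    (e : E) {x : E} (hx : ‖x‖ < 1) :
    ∫ u, K (u - x) * inner ℝ e u ∂(sphMeas E) = ∫ u, K u * inner ℝ e u ∂(sphMeas E) := by
  have hKm : Measurable K := measurable_of_continuousOn_compl_singleton 0 hKc
  have hSm : Measurable (Sfun x) := by unfold Sfun; fun_prop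
  have hqm : Measurable (qfun x e) := by unfold qfun; fun_prop
  have hpm : Measurable (pfun x e) := by unfold pfun; fun_prop
  have hdim : 0 < finrank ℝ E := finrank_pos
  have h1x : 0 < 1 - ‖x‖ ^ 2 := by nlinarith [norm_nonneg x]
  have hsub : sphere (0 : E) 1 ⊆ {0}ᶜ := by
    intro u hu h0
    rw [Set.mem_singleton_iff] at h0
    simp [h0] at hu
  have hK1 : ContinuousOn K (sphere 0 1) := hKc.mono hsub
  have hq1 : ContinuousOn (qfun x e) (sphere 0 1) := by
    unfold qfun
    refine ContinuousOn.div (by fun_prop) (by unfold Sfun; fun_prop) ?_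
    intro u hu
    have hu' : ‖u‖ = 1 := by simpa using hu
    rw [hu', Sfun, hu']
    have : 0 < (inner ℝ x u) ^ 2 + (1 - ‖x‖ ^ 2) * 1 ^ 2 := by positivity
    have := Real.sqrt_pos.2 this
    positivity
  calc ∫ u, K (u - x) * inner ℝ e u ∂(sphMeas E)
      = ∫ u, ((1 - inner ℝ x u) * (‖u - x‖⁻¹) ^ finrank ℝ E) *
          (K (rproj (u - x)) * pfun x e (rproj (u - x))) ∂(sphMeas E) := by
        refine integral_congr_ae ?_
        filter_upwards [sphMeas_ae] with u hu
        have hD := sub_pos_norm hx hu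
        have hne : u - x ≠ 0 := norm_pos_iff.1 hD
        have hDi : 0 < ‖u - x‖⁻¹ := inv_pos.2 hD
        rw [rproj, pfun_smul hDi, hKh _ hDi _ hne, inv_inv]
        have hp := pfun_sub e hx hu
        obtain ⟨k, hk⟩ : ∃ k, finrank ℝ E = k + 1 := ⟨_, (Nat.sub_add_cancel hdim).symm⟩
        rw [hk, Nat.add_sub_cancel]
        calc K (u - x) * inner ℝ e u
            = (inner ℝ e u * ‖u - x‖) * (‖u - x‖⁻¹ ^ (k + 1) * ‖u - x‖ ^ k) * K (u - x) := by
              rw [pow_succ, inv_pow]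
              field_simp
          _ = _ := by rw [← hp]; ring
    _ = ∫ u, K u * pfun x e u ∂(sphMeas E) :=
        sphere_change_integral hx (fun u => K u * pfun x e u) (hKm.mul hpm)
    _ = ∫ u, (K u * qfun x e u + K u * inner ℝ e u) ∂(sphMeas E) := by
        refine integral_congr_ae ?_
        filter_upwards [sphMeas_ae] with u hu
        rw [pfun, hu]; ring
    _ = ∫ u, K u * inner ℝ e u ∂(sphMeas E) := by
        rw [integral_add, odd_integral_zero (f := fun u => K u * qfun x e u) (hKm.mul hqm), zero_add]
        · intro u; simp [hKo, qfun_neg]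
        · exact integrable_sph (hKm.mul hqm) (hK1.mul hq1)
        · exact integrable_sph (hKm.mul (by fun_prop)) (hK1.mul (by fun_prop))

lemma hausdorff_sphere {n : ℕ} (hn : finrank ℝ E = n + 1) {R : ℝ} (hR : 0 < R) :
    ∃ C : ℝ, ∀ g : E → ℝ, ∫ y in sphere (0 : E) R, g y ∂μH[(n : ℝ)] =
      C * ∫ u, g (R • u) ∂(sphMeas E) := by
  have : Nontrivial E := Module.nontrivial_of_finrank_pos (R := ℝ) (by omega)
  let σ : Measure E := (μH[(n : ℝ)]).restrict (sphere (0 : E) R)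
  have : IsFiniteMeasure σ := ⟨by simpa [σ] using sphere_finite hn R⟩
  let h : E ≃ₜ E := Homeomorph.smulOfNeZero R⁻¹ (inv_pos.2 hR).ne'
  let σ' : Measure E := σ.map h
  have : IsFiniteMeasure σ' := by simp only [σ']; infer_instance
  have hσ : RotInv σ := by
    intro L
    have h1 : (μH[(n : ℝ)] : Measure E).map L = μH[(n : ℝ)] :=
      L.toIsometryEquiv.map_hausdorffMeasure _
    have h2 : L ⁻¹' sphere (0 : E) R = sphere 0 R := by ext y; simp
    simp only [σ]
    conv_rhs => rw [← h1]
    rw [Measure.restrict_map L.continuous.measurable isClosed_sphere.measurableSet, h2]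
  have hσ' : RotInv σ' := by
    intro L
    simp only [σ']
    conv_rhs => rw [← hσ L]
    rw [Measure.map_map L.continuous.measurable h.measurable,
      Measure.map_map h.measurable L.continuous.measurable]
    congr 1
    funext y
    simp [h]
  have hs' : ∀ᵐ u ∂σ', ‖u‖ = 1 := by
    simp only [σ']
    rw [h.measurableEmbedding.ae_map_iff]
    filter_upwards [ae_restrict_mem isClosed_sphere.measurableSet] with y hy
    have : ‖y‖ = R := by simpa using hy
    simp [h, norm_smul, this, abs_of_pos hR, hR.ne']
  have hu := rotInv_unique hσ' sphMeas_rotInv hs' sphMeas_ae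
  refine ⟨(σ' Set.univ).toReal / (sphMeas E Set.univ).toReal, fun g => ?_⟩
  have hpos : (sphMeas E Set.univ).toReal ≠ 0 := by
    rw [ENNReal.toReal_ne_zero]
    refine ⟨?_, measure_ne_top _ _⟩
    unfold sphMeas
    rw [Measure.map_apply measurable_subtype_coe MeasurableSet.univ, Set.preimage_univ,
      ne_eq, Measure.measure_univ_eq_zero]
    exact toSphere_ne_zero _
  have e1 : ∫ y in sphere (0 : E) R, g y ∂μH[(n : ℝ)] = ∫ u, g (R • u) ∂σ' := by
    simp only [σ']
    rw [h.measurableEmbedding.integral_map]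
    simp [h, smul_smul, hR.ne', σ]
  have e2 := congrArg (fun m : Measure E => ∫ u, g (R • u) ∂m) hu
  simp only [integral_smul_measure, smul_eq_mul] at e2
  rw [e1]
  field_simp
  linear_combination e2

end mainlemma

section final
open Module

variable {n : ℕ}

lemma fundSol_smul (hn : 3 ≤ n) {c : ℝ} (hc : c ≠ 0) (z : EuclideanSpace ℝ (Fin n)) :
    fundSol n (c • z) = |c| ^ ((2 : ℝ) - n) * fundSol n z := by
  unfold fundSol
  rw [norm_smul, Real.norm_eq_abs, Real.mul_rpow (abs_nonneg _) (norm_nonneg _)]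
  ring

lemma fundSol_contDiffAt (m : ℕ) {z : EuclideanSpace ℝ (Fin n)} (hz : z ≠ 0) :
    ContDiffAt ℝ m (fundSol n) z := by
  unfold fundSol
  exact contDiffAt_const.mul ((contDiffAt_norm ℝ hz).rpow_const_of_ne (norm_ne_zero_iff.2 hz))

lemma iter_comp_smul (f : EuclideanSpace ℝ (Fin n) → ℝ) (m : ℕ) {c : ℝ} (hc : c ≠ 0)
    (z : EuclideanSpace ℝ (Fin n)) (w : Fin m → EuclideanSpace ℝ (Fin n)) :
    iteratedFDeriv ℝ m (fun z => f (c • z)) z w = c ^ m * iteratedFDeriv ℝ m f (c • z) w := by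
  let g : EuclideanSpace ℝ (Fin n) ≃L[ℝ] EuclideanSpace ℝ (Fin n) :=
    ContinuousLinearEquiv.smulLeft (Units.mk0 c hc)
  have h := g.iteratedFDerivWithin_comp_right f uniqueDiffOn_univ (x := z) (Set.mem_univ _) m
  rw [Set.preimage_univ, iteratedFDerivWithin_univ, iteratedFDerivWithin_univ] at h
  have hg : ∀ y, g y = c • y := fun y => rfl
  have e : (f ∘ g) = fun z => f (c • z) := by funext y; simp [hg]
  rw [e] at h
  rw [h]
  simp only [ContinuousMultilinearMap.compContinuousLinearMap_apply,
    ContinuousLinearEquiv.coe_coe, hg]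
  rw [ContinuousMultilinearMap.map_smul_univ]
  simp

/-- The kernel. -/
def Kfun (n m : ℕ) (μ : Fin n → ℕ) (v : Fin m → Fin n) (z : EuclideanSpace ℝ (Fin n)) : ℝ :=
  (iteratedFDeriv ℝ m (fundSol n) (-z) fun i => ee (v i)) * ∏ i, (z i) ^ μ i

lemma prod_smul_pow (μ : Fin n → ℕ) (c : ℝ) (z : EuclideanSpace ℝ (Fin n)) :
    ∏ i, ((c • z) i) ^ μ i = c ^ (∑ i, μ i) * ∏ i, (z i) ^ μ i := by
  simp [mul_pow, Finset.prod_mul_distrib, Finset.prod_pow_eq_pow_sum]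

lemma Kfun_odd (hn : 3 ≤ n) {m : ℕ} (μ : Fin n → ℕ) (hm : m = (∑ i, μ i) + 1)
    (v : Fin m → Fin n) (z : EuclideanSpace ℝ (Fin n)) :
    Kfun n m μ v (-z) = - Kfun n m μ v z := by
  have h1 := iter_comp_smul (fundSol n) m (c := -1) (by norm_num) (-z) fun i => ee (v i)
  have e : (fun z : EuclideanSpace ℝ (Fin n) => fundSol n ((-1 : ℝ) • z)) = fundSol n := by
    funext y; rw [fundSol_smul hn (by norm_num)]; simp
  rw [e] at h1
  have h2 := prod_smul_pow μ (-1) z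
  simp only [neg_smul, one_smul, neg_neg] at h1 h2
  unfold Kfun
  have h4 : (-1 : ℝ) ^ m = -(-1 : ℝ) ^ (∑ i, μ i) := by rw [hm, pow_succ]; ring
  rw [h1, h2, neg_neg, h4]
  ring

lemma Kfun_hom (hn : 3 ≤ n) {m : ℕ} (μ : Fin n → ℕ) (hm : m = (∑ i, μ i) + 1)
    (v : Fin m → Fin n) {r : ℝ} (hr : 0 < r) (z : EuclideanSpace ℝ (Fin n)) (hz : z ≠ 0) :
    Kfun n m μ v (r • z) = (r⁻¹) ^ (n - 1) * Kfun n m μ v z := by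
  have h1 := iter_comp_smul (fundSol n) m hr.ne' (-z) fun i => ee (v i)
  have e : (fun z : EuclideanSpace ℝ (Fin n) => fundSol n (r • z)) =
      (r ^ ((2 : ℝ) - n)) • fundSol n := by
    funext y; rw [fundSol_smul hn hr.ne', abs_of_pos hr]; rfl
  rw [e, iteratedFDeriv_const_smul_apply (fundSol_contDiffAt m (neg_ne_zero.2 hz))] at h1
  have h2 := prod_smul_pow μ r z
  have h3 : r ^ ((2 : ℝ) - n) = r * (r⁻¹) ^ (n - 1) := by
    rw [show (2 : ℝ) - n = 1 + -((n - 1 : ℕ) : ℝ) by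
      rw [Nat.cast_sub (by omega)]; push_cast; ring]
    rw [Real.rpow_add hr, Real.rpow_one, Real.rpow_neg hr.le, Real.rpow_natCast, inv_pow]
  unfold Kfun
  rw [h2, ← smul_neg]
  rw [ContinuousMultilinearMap.smul_apply, smul_eq_mul, h3] at h1
  have h4 : r ^ m = r * r ^ (∑ i, μ i) := by rw [hm, pow_succ]; ring
  rw [h4] at h1
  apply mul_left_cancel₀ hr.ne'
  linear_combination (-∏ i, (z i) ^ μ i) * h1

lemma Kfun_cont {m : ℕ} (μ : Fin n → ℕ) (v : Fin m → Fin n) :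
    ContinuousOn (Kfun n m μ v) {0}ᶜ := by
  intro z hz
  have hz' : -z ≠ 0 := neg_ne_zero.2 hz
  apply ContinuousAt.continuousWithinAt
  unfold Kfun
  have h1 : ContinuousAt (iteratedFDeriv ℝ m (fundSol n)) (-z) :=
    ((fundSol_contDiffAt (m + m) hz').iteratedFDeriv_right (m := (m : ℕ)) (i := m)
      (by norm_cast)).continuousAt
  have h2 : ContinuousAt (fun z => iteratedFDeriv ℝ m (fundSol n) (-z)) z :=
    ContinuousAt.comp (f := fun z => -z) h1 continuous_neg.continuousAt
  refine ContinuousAt.mul ?_ (by fun_prop)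
  exact ((ContinuousMultilinearMap.apply ℝ _ ℝ fun i => ee (v i)).continuous.continuousAt).comp h2

end final

theorem stmt_17 (n m : ℕ) (hn : 3 ≤ n) (μ : Fin n → ℕ) (hm : m = (∑ i, μ i) + 1)
    (j : Fin n) (R : ℝ) (hR : 0 < R) (v : Fin m → Fin n) :
    ∃ c : ℝ, ∀ x ∈ ball (0 : EuclideanSpace ℝ (Fin n)) R,
      (∫ y in sphere (0 : EuclideanSpace ℝ (Fin n)) R,
          (iteratedFDeriv ℝ m (fun z => fundSol n (z - y)) x fun i => ee (v i)) *
            (∏ i, (y i - x i) ^ μ i) * (y j / R) ∂μH[(n : ℝ) - 1]) = c := by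
  have hfr : Module.finrank ℝ (EuclideanSpace ℝ (Fin n)) = (n - 1) + 1 := by
    rw [finrank_euclideanSpace_fin]; omega
  have hnt : Nontrivial (EuclideanSpace ℝ (Fin n)) :=
    Module.nontrivial_of_finrank_pos (R := ℝ) (by omega)
  obtain ⟨C, hC⟩ := hausdorff_sphere hfr hR
  have hcast : ((n - 1 : ℕ) : ℝ) = (n : ℝ) - 1 := by rw [Nat.cast_sub (by omega)]; simp
  rw [hcast] at hC
  let K := Kfun n m μ v
  have hkey := fun {x : EuclideanSpace ℝ (Fin n)} (hx : ‖x‖ < 1) =>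
    kernel_const K (Kfun_cont μ v) (Kfun_odd hn μ hm v) (fun r hr z hz => by
      rw [finrank_euclideanSpace_fin]; exact Kfun_hom hn μ hm v hr z hz)
      (EuclideanSpace.single j (1 : ℝ)) hx
  refine ⟨C * ((R⁻¹) ^ (n - 1) * ∫ u, K u * inner ℝ (EuclideanSpace.single j (1 : ℝ)) u
    ∂(sphMeas (EuclideanSpace ℝ (Fin n)))), fun x hx => ?_⟩
  have hxR : ‖x‖ < R := by simpa using hx
  have hx1 : ‖R⁻¹ • x‖ < 1 := by
    rw [norm_smul, Real.norm_of_nonneg (inv_pos.2 hR).le, inv_mul_lt_iff₀ hR]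
    simpa using hxR
  rw [hC, ← hkey hx1]
  congr 1
  rw [← integral_const_mul]
  refine integral_congr_ae ?_
  filter_upwards [sphMeas_ae] with u hu
  have hne : u - R⁻¹ • x ≠ 0 := norm_pos_iff.1 (sub_pos_norm hx1 hu)
  have h1 := Kfun_hom hn μ hm v hR _ hne
  have h2 : R • (u - R⁻¹ • x) = R • u - x := by simp [smul_sub, smul_smul, hR.ne']
  rw [h2] at h1
  rw [iteratedFDeriv_comp_sub, ← mul_assoc]
  simp only [K]
  rw [← h1]
  unfold Kfun
  rw [neg_sub]
  simp [EuclideanSpace.inner_single_left, hR.ne']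
end
end
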